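/- arXiv:2201.05378 — 3 statements merged into one kernel-verified Lean document; each statement's English description precedes it below -/
import Mathlib

section
/- Let p be a prime with p ≡ 2 (mod 3) (and p odd). Then Σ_{k=0}^{(p+1)/3} (−1)^k (−1/3)_k^3 / k!^3 ≡ −(−1)^{(p+1)/3} · p · Σ_{k=0}^{(p+1)/3} (−1/3)_k^2 (1/2)_k / (k! (1/3)_k (5/6)_k) (mod p^2). -/
open Finset

/-- The Pochhammer symbol `(a)_k = a(a+1)⋯(a+k-1)` for rational `a`. -/
def poch (a : ℚ) (k : ℕ) : ℚ := ∏ j ∈ Finset.range k, (a + j)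

/-
Put `x = a + n`. Expanding by Chu–Vandermonde, exchanging the summations and summing back by
Chu–Vandermonde gives the terminating quadratic transformation
`∑ (-1)^k (a)_k (a+x)_k (a-x)_k / (k! (1+x)_k (1-x)_k)
  = (-1)^n x ∑ C(2k,k) (a+x)_k (a-x)_k / (a)_{2k+1}`, both sums over `0 ≤ k ≤ n`.
Here `x` enters through the products `(b+x)_k (b-x)_k`, which are even in `x`, so replacing them
by `(b)_k^2` costs only `O(x^2)` `p`-adically; on the right the factor `x` absorbs the single
factor of `(a)_{2k+1}` that `p` may divide. For `a = -1/3` and `n = (p+1)/3` one has `x = p/3`.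
-/

theorem poch_zero (a : ℚ) : poch a 0 = 1 := prod_range_zero _

theorem poch_succ (a : ℚ) (k : ℕ) : poch a (k + 1) = poch a k * (a + k) := prod_range_succ _ _

theorem poch_add (a : ℚ) (m n : ℕ) : poch a (m + n) = poch a m * poch (a + m) n := by
  simp [poch, prod_range_add, add_assoc]

theorem poch_mul_poch_of_add_eq (a : ℚ) {m n m' n' : ℕ} (h : m + n = m' + n') :
    poch a m * poch (a + m) n = poch a m' * poch (a + m') n' := by
  rw [← poch_add, h, poch_add]

theorem poch_succ_left (a : ℚ) (k : ℕ) : poch a (k + 1) = a * poch (a + 1) k := by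
  rw [add_comm k, poch_add]
  simp [poch]

theorem poch_eq_ascPochhammer_eval (a : ℚ) (k : ℕ) : poch a k = (ascPochhammer ℚ k).eval a := by
  induction k with
  | zero => simp [poch_zero]
  | succ k ih => rw [poch_succ, ascPochhammer_succ_eval, ih]

theorem poch_ne_zero_of_le {a : ℚ} {m n : ℕ} (hmn : m ≤ n) (h : poch a n ≠ 0) :
    poch a m ≠ 0 := by
  obtain ⟨k, rfl⟩ := Nat.exists_eq_add_of_le hmn
  exact left_ne_zero_of_mul (poch_add a m k ▸ h)

theorem poch_one (k : ℕ) : poch 1 k = k.factorial := by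
  rw [poch_eq_ascPochhammer_eval, ascPochhammer_eval_one]

theorem poch_neg_eq_descPochhammer_smeval (a : ℚ) (k : ℕ) :
    poch (-a) k = (-1) ^ k * (descPochhammer ℤ k).smeval a := by
  rw [poch_eq_ascPochhammer_eval, ← Polynomial.ascPochhammer_smeval_eq_eval,
    Polynomial.ascPochhammer_smeval_neg_eq_descPochhammer, Int.negOnePow_def, Units.smul_def]
  simp

theorem descPochhammer_smeval_eq_poch (a : ℚ) (k : ℕ) :
    (descPochhammer ℤ k).smeval a = poch (a - k + 1) k := by
  rw [Polynomial.descPochhammer_smeval_eq_ascPochhammer,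
    Polynomial.ascPochhammer_smeval_eq_eval, poch_eq_ascPochhammer_eval]

theorem poch_neg_reflect (a : ℚ) (k : ℕ) : poch (-a) k = (-1) ^ k * poch (a - k + 1) k := by
  rw [poch_neg_eq_descPochhammer_smeval, descPochhammer_smeval_eq_poch]

theorem poch_neg_natCast (n k : ℕ) :
    poch (-n) k = (-1) ^ k * (k.factorial * n.choose k) := by
  rw [poch_neg_eq_descPochhammer_smeval, Polynomial.descPochhammer_smeval_eq_descFactorial,
    Nat.descFactorial_eq_factorial_mul_choose, Nat.cast_mul]

theorem poch_two_mul (a : ℚ) (k : ℕ) :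
    poch a (2 * k) = 4 ^ k * poch (a / 2) k * poch ((a + 1) / 2) k := by
  induction k with
  | zero => simp [poch_zero]
  | succ k ih =>
    rw [mul_add_one, poch_succ, poch_succ, ih, poch_succ, poch_succ]
    push_cast
    ring

theorem poch_one_add_natCast_self (k : ℕ) : poch (1 + k) k = k.factorial * k.centralBinom := by
  have hfact : (k.factorial : ℚ) ≠ 0 := mod_cast k.factorial_ne_zero
  apply mul_left_cancel₀ hfact
  have hchoose := Nat.add_choose_mul_factorial_mul_factorial k k
  rw [← two_mul, ← Nat.centralBinom_eq_two_mul_choose] at hchoose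
  calc (k.factorial : ℚ) * poch (1 + k) k = (2 * k).factorial := by
        rw [← poch_one, ← poch_add, ← two_mul, poch_one]
    _ = k.factorial * (k.factorial * k.centralBinom) := by
        rw [← hchoose]
        push_cast
        ring

theorem poch_half_mul_four_pow (k : ℕ) :
    poch (1 / 2) k * 4 ^ k = k.factorial * k.centralBinom := by
  have hfact : (k.factorial : ℚ) ≠ 0 := mod_cast k.factorial_ne_zero
  have hdup : poch 1 (k + k) = 4 ^ k * poch (1 / 2) k * k.factorial := by
    rw [← two_mul, poch_two_mul, ← poch_one]
    norm_num
  rw [poch_add, poch_one, poch_one_add_natCast_self] at hdup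
  apply mul_left_cancel₀ hfact
  linear_combination -hdup

theorem poch_sub_eq_sum_choose_mul (c d : ℚ) (n : ℕ) :
    poch (c - d) n =
      ∑ i ∈ range (n + 1), n.choose i * ((-1) ^ i * poch d i * poch (c + i) (n - i)) := by
  have hdesc_neg (i : ℕ) : (descPochhammer ℤ i).smeval (-d) = (-1) ^ i * poch d i := by
    have h := poch_neg_eq_descPochhammer_smeval (-d) i
    rw [neg_neg] at h
    rw [h, ← mul_assoc, ← mul_pow, neg_one_mul, neg_neg, one_pow, one_mul]
  calc poch (c - d) n = (descPochhammer ℤ n).smeval (-d + (c + n - 1)) := by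
        rw [descPochhammer_smeval_eq_poch]
        congr 1
        ring
    _ = _ := by
        rw [Ring.descPochhammer_smeval_add n (Commute.all _ _),
          Nat.sum_antidiagonal_eq_sum_range_succ_mk]
        refine sum_congr rfl fun i hi => ?_
        rw [hdesc_neg, descPochhammer_smeval_eq_poch, Nat.cast_sub (mem_range_succ_iff.1 hi)]
        congr 3
        ring

theorem choose_mul_poch_reindex (b : ℚ) (k i m : ℕ) :
    ((k + i + m).choose k * (i + m).choose i : ℚ) *
        (poch (b + (k + (k + i) : ℕ)) m * poch (b + (k + i + m + k : ℕ)) (i + m)) =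
      (k + i + m).choose (k + i) * (k + i).choose k *
        (poch (b + (k + i : ℕ) + k) i * poch (b + (2 * (k + i) : ℕ)) (2 * m)) := by
  have hchoose : (k + i + m).choose (k + i) * (k + i).choose k =
      (k + i + m).choose k * (i + m).choose i := by
    rw [Nat.choose_mul (Nat.le_add_right k i), show k + i + m - k = i + m by lia,
      Nat.add_sub_cancel_left]
  have hpoch : poch (b + (k + (k + i) : ℕ)) m * poch (b + (k + i + m + k : ℕ)) (i + m) =
      poch (b + (k + i : ℕ) + k) i * poch (b + (2 * (k + i) : ℕ)) (2 * m) := by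
    convert poch_mul_poch_of_add_eq (b + (k + (k + i) : ℕ))
      (show m + (i + m) = i + 2 * m by lia) using 3 <;> push_cast <;> ring
  rw [hpoch]
  exact_mod_cast congrArg (fun c : ℕ => (c : ℚ) * _) hchoose.symm

theorem sum_choose_mul_poch_wellPoised (a d : ℚ) (n : ℕ) :
    ∑ k ∈ range (n + 1), n.choose k * poch a k * poch d k *
        poch (1 + a - d + k) (n - k) * poch (1 + a + (n + k : ℕ)) (n - k) =
      ∑ j ∈ range (n + 1), (-1) ^ j * n.choose j * poch d j *
        poch (1 + j) j * poch (1 + a + (2 * j : ℕ)) (2 * (n - j)) := by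
  let F (k i : ℕ) : ℚ := (-1) ^ i * n.choose k * (n - k).choose i * poch a k * poch d (k + i) *
    poch (1 + a + (k + (k + i) : ℕ)) (n - (k + i)) * poch (1 + a + (n + k : ℕ)) (n - k)
  have hleft : ∀ k ∈ range (n + 1), n.choose k * poch a k * poch d k *
      poch (1 + a - d + k) (n - k) * poch (1 + a + (n + k : ℕ)) (n - k) =
      ∑ i ∈ range (n + 1 - k), F k i := by
    intro k hk
    rw [show 1 + a - d + k = 1 + a + (2 * k : ℕ) - (d + k) by push_cast; ring,
      poch_sub_eq_sum_choose_mul, ← Nat.sub_add_comm (mem_range_succ_iff.1 hk), mul_sum, sum_mul]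
    refine sum_congr rfl fun i _ => ?_
    have hshift : 1 + a + (k + (k + i) : ℕ) = 1 + a + (2 * k : ℕ) + i := by push_cast; ring
    simp only [F, poch_add d k i, hshift, Nat.sub_sub]
    ring
  have hright : ∀ j ∈ range (n + 1), ∀ k ∈ range (j + 1), F k (j - k) =
      (-1) ^ j * n.choose j * poch d j * poch (1 + a + (2 * j : ℕ)) (2 * (n - j)) *
        (j.choose k * ((-1) ^ k * poch a k * poch (1 + a + j + k) (j - k))) := by
    intro j hj k hk
    obtain ⟨i, rfl⟩ := Nat.exists_eq_add_of_le (mem_range_succ_iff.1 hk)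
    obtain ⟨m, rfl⟩ := Nat.exists_eq_add_of_le (mem_range_succ_iff.1 hj)
    have hsign : (-1 : ℚ) ^ i = (-1) ^ (k + i) * (-1) ^ k := by
      simp [pow_add, mul_right_comm, ← mul_pow]
    simp only [F, Nat.add_sub_cancel_left, show k + i + m - k = i + m by lia]
    rw [hsign]
    linear_combination (-1) ^ (k + i) * (-1) ^ k * poch a k * poch d (k + i) *
      choose_mul_poch_reindex (1 + a) k i m
  rw [sum_congr rfl hleft, ← sum_range_diag_flip]
  refine sum_congr rfl fun j hj => ?_
  rw [sum_congr rfl (hright j hj), ← mul_sum, ← poch_sub_eq_sum_choose_mul,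
    show 1 + a + j - a = 1 + j by ring]
  ring

theorem wellPoised_sum_eq {a d : ℚ} {n : ℕ} (hd : poch (1 + a - d) n ≠ 0)
    (ha : poch (1 + a) (2 * n) ≠ 0) :
    poch (1 + a - d) n * ∑ k ∈ range (n + 1), (-1) ^ k * poch a k * (poch d k * poch (-n) k) /
        (k.factorial * (poch (1 + a + n) k * poch (1 + a - d) k)) =
      poch (1 + a) n * ∑ j ∈ range (n + 1),
        j.centralBinom * (poch d j * poch (-n) j) / poch (1 + a) (2 * j) := by
  have hn : poch (1 + a) n ≠ 0 := poch_ne_zero_of_le (by lia) ha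
  have hleft : ∀ k ∈ range (n + 1), n.choose k * poch a k * poch d k *
      poch (1 + a - d + k) (n - k) * poch (1 + a + (n + k : ℕ)) (n - k) =
      poch (1 + a) (2 * n) / poch (1 + a) n * (poch (1 + a - d) n *
        ((-1) ^ k * poch a k * (poch d k * poch (-n) k) /
          (k.factorial * (poch (1 + a + n) k * poch (1 + a - d) k)))) := by
    intro k hk
    obtain ⟨m, rfl⟩ := Nat.exists_eq_add_of_le (mem_range_succ_iff.1 hk)
    have hdk : poch (1 + a - d) k ≠ 0 := poch_ne_zero_of_le (by lia) hd
    have hank : poch (1 + a) (k + m + k) ≠ 0 := poch_ne_zero_of_le (by lia) ha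
    rw [show 2 * (k + m) = k + m + k + m by lia, poch_add _ (k + m + k), Nat.add_sub_cancel_left,
      poch_add (1 + a - d) k, poch_neg_natCast]
    rw [poch_add _ (k + m) k] at hank ⊢
    have := right_ne_zero_of_mul hank
    have := k.factorial_ne_zero
    have hsign : ((-1 : ℚ) ^ k) ^ 2 = 1 := by simp [← pow_mul]
    field_simp
    rw [hsign, mul_one]
  have hright : ∀ j ∈ range (n + 1), (-1) ^ j * n.choose j * poch d j *
      poch (1 + j) j * poch (1 + a + (2 * j : ℕ)) (2 * (n - j)) =
      poch (1 + a) (2 * n) *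
        (j.centralBinom * (poch d j * poch (-n) j) / poch (1 + a) (2 * j)) := by
    intro j hj
    have hj' : j ≤ n := mem_range_succ_iff.1 hj
    have hne : poch (1 + a) (2 * j) ≠ 0 := poch_ne_zero_of_le (by lia) ha
    rw [poch_one_add_natCast_self, poch_neg_natCast, show 2 * n = 2 * j + 2 * (n - j) by lia,
      poch_add (1 + a)]
    field_simp
  have key := sum_choose_mul_poch_wellPoised a d n
  rw [sum_congr rfl hleft, sum_congr rfl hright, ← mul_sum, ← mul_sum, ← mul_sum,
    div_mul_eq_mul_div, div_eq_iff hn, mul_assoc] at key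
  rw [mul_left_cancel₀ ha key, mul_comm]

theorem sum_poch_add_mul_poch_sub_eq {a : ℚ} {n : ℕ} (ha : poch a (2 * n + 1) ≠ 0) {x : ℚ}
    (hx : x = a + n) :
    ∑ k ∈ range (n + 1), (-1) ^ k * poch a k * (poch (a + x) k * poch (a - x) k) /
        (k.factorial * (poch (1 + x) k * poch (1 - x) k)) =
      (-1) ^ n * x * ∑ k ∈ range (n + 1),
        k.centralBinom * (poch (a + x) k * poch (a - x) k) / poch a (2 * k + 1) := by
  have han : poch a n ≠ 0 := poch_ne_zero_of_le (by lia) ha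
  have hsucc (m : ℕ) : poch a (m + 1) = a * poch (1 + a) m := by rw [poch_succ_left, add_comm]
  have ha0 : a ≠ 0 := left_ne_zero_of_mul (hsucc _ ▸ ha)
  have hrefl : poch (1 - x) n = (-1) ^ n * poch a n := by
    rw [← neg_sub, poch_neg_reflect]
    congr 2
    linear_combination hx
  have hshift : a * poch (1 + a) n = x * poch a n := by rw [← hsucc, poch_succ, hx, mul_comm]
  have key := wellPoised_sum_eq (a := a) (d := a + x) (n := n)
    (by rw [show 1 + a - (a + x) = 1 - x by ring, hrefl]; simpa using han)
    (right_ne_zero_of_mul (hsucc _ ▸ ha))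
  rw [show 1 + a - (a + x) = 1 - x by ring, show (-n : ℚ) = a - x by linear_combination hx,
    show 1 + a + n = 1 + x by linear_combination -hx, hrefl] at key
  have hright : ∑ k ∈ range (n + 1),
      k.centralBinom * (poch (a + x) k * poch (a - x) k) / poch a (2 * k + 1) =
      a⁻¹ * ∑ k ∈ range (n + 1),
        k.centralBinom * (poch (a + x) k * poch (a - x) k) / poch (1 + a) (2 * k) := by
    rw [mul_sum]
    exact sum_congr rfl fun k _ => by rw [hsucc]; ring
  have hsign : (-1 : ℚ) ^ n * (-1) ^ n = 1 := by rw [← mul_pow]; simp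
  rw [hright]
  generalize (∑ k ∈ range (n + 1), (-1) ^ k * poch a k * (poch (a + x) k * poch (a - x) k) /
    (k.factorial * (poch (1 + x) k * poch (1 - x) k))) = L at key ⊢
  generalize (∑ k ∈ range (n + 1),
    k.centralBinom * (poch (a + x) k * poch (a - x) k) / poch (1 + a) (2 * k)) = R at key ⊢
  apply mul_left_cancel₀ (mul_ne_zero ha0 han)
  linear_combination (-1) ^ n * a * key + (-1) ^ n * R * hshift - a * poch a n * L * hsign -
    (-1) ^ n * x * poch a n * R * mul_inv_cancel₀ ha0

theorem neg_one_third_add_natCast_div_three {m : ℕ} (hm : m % 3 = 2) :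
    (-1 / 3 : ℚ) + ((m + 1) / 3 : ℕ) = m / 3 := by
  rw [Nat.cast_div (by lia) (by norm_num)]
  push_cast
  ring

section padicNorm

variable {p : ℕ} [Fact p.Prime]

theorem padicNorm_pow (x : ℚ) (k : ℕ) : padicNorm p (x ^ k) = padicNorm p x ^ k :=
  IsAbsoluteValue.abv_pow (padicNorm p) x k

theorem padicNorm_poch (a : ℚ) (k : ℕ) :
    padicNorm p (poch a k) = ∏ j ∈ range k, padicNorm p (a + j) :=
  map_prod (IsAbsoluteValue.toAbsoluteValue (padicNorm p)) _ _

theorem padicNorm_add_natCast_le_one {a : ℚ} (ha : padicNorm p a ≤ 1) (j : ℕ) :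
    padicNorm p (a + j) ≤ 1 :=
  padicNorm.nonarchimedean.trans (max_le ha (padicNorm.of_nat j))

theorem padicNorm_le_one_of_add_natCast {a : ℚ} {j : ℕ} (h : padicNorm p (a + j) ≤ 1) :
    padicNorm p a ≤ 1 := by
  rw [← add_sub_cancel_right a (j : ℚ)]
  exact padicNorm.sub.trans (max_le h (padicNorm.of_nat j))

theorem padicNorm_poch_le_one {a : ℚ} (ha : padicNorm p a ≤ 1) (k : ℕ) :
    padicNorm p (poch a k) ≤ 1 := by
  rw [padicNorm_poch]
  exact prod_le_one (fun _ _ => padicNorm.nonneg _) fun j _ => padicNorm_add_natCast_le_one ha j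

theorem padicNorm_factorial {k : ℕ} (hk : k < p) : padicNorm p k.factorial = 1 := by
  rw [padicNorm.nat_eq_one_iff, (Fact.out : p.Prime).dvd_factorial]
  exact hk.not_ge

theorem padicNorm_add_eq_right {x y : ℚ} (h : padicNorm p x < padicNorm p y) :
    padicNorm p (x + y) = padicNorm p y := by
  rw [padicNorm.add_eq_max_of_ne h.ne, max_eq_right h.le]

theorem padicNorm_poch_add_mul_poch_sub_sub_le {a x : ℚ} (ha : padicNorm p a ≤ 1)
    (hx : padicNorm p x ≤ 1) (k : ℕ) :
    padicNorm p (poch (a + x) k * poch (a - x) k - poch a k ^ 2) ≤ padicNorm p x ^ 2 := by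
  induction k with
  | zero => simp [poch_zero, sq_nonneg]
  | succ k ih =>
    have hstep : poch (a + x) (k + 1) * poch (a - x) (k + 1) - poch a (k + 1) ^ 2 =
        (poch (a + x) k * poch (a - x) k - poch a k ^ 2) * (a + k) ^ 2 -
          poch (a + x) k * poch (a - x) k * x ^ 2 := by
      simp only [poch_succ]
      ring
    have hplus := padicNorm_poch_le_one (padicNorm.nonarchimedean.trans (max_le ha hx)) k
    have hminus := padicNorm_poch_le_one (padicNorm.sub.trans (max_le ha hx)) k
    rw [hstep]
    refine padicNorm.sub.trans (max_le ?_ ?_)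
    · rw [padicNorm.mul, padicNorm_pow]
      exact (mul_le_of_le_one_right (padicNorm.nonneg _)
        (pow_le_one₀ (padicNorm.nonneg _) (padicNorm_add_natCast_le_one ha k))).trans ih
    · rw [padicNorm.mul, padicNorm.mul, padicNorm_pow]
      exact mul_le_of_le_one_left (sq_nonneg _)
        (mul_le_one₀ hplus (padicNorm.nonneg _) hminus)

theorem padicNorm_poch_one_add_mul_poch_one_sub {x : ℚ} (hx : padicNorm p x < 1) {k : ℕ}
    (hk : k < p) : padicNorm p (poch (1 + x) k * poch (1 - x) k) = 1 := by
  have hsq : padicNorm p (poch 1 k ^ 2) = 1 := by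
    rw [padicNorm_pow, poch_one, padicNorm_factorial hk, one_pow]
  have hdiff := padicNorm_poch_add_mul_poch_sub_sub_le padicNorm.one.le hx.le k
  have hlt : padicNorm p x ^ 2 < 1 := pow_lt_one₀ (padicNorm.nonneg x) hx two_ne_zero
  rw [← sub_add_cancel (poch (1 + x) k * poch (1 - x) k) (poch 1 k ^ 2),
    padicNorm_add_eq_right (by rw [hsq]; exact hdiff.trans_lt hlt), hsq]

theorem padicNorm_add_natCast_eq_one {a : ℚ} {n j : ℕ} (ha : padicNorm p (a + n) < 1)
    (hn : n < p) (hj : j < n + p) (hjn : j ≠ n) : padicNorm p (a + j) = 1 := by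
  have hdiff : padicNorm p ((j - n : ℤ) : ℚ) = 1 := by
    rw [padicNorm.int_eq_one_iff]
    intro hdvd
    exact hjn (by have := Int.eq_zero_of_abs_lt_dvd hdvd (by rw [abs_lt]; lia); lia)
  rw [show a + j = a + n + ((j - n : ℤ) : ℚ) by push_cast; ring,
    padicNorm_add_eq_right (hdiff ▸ ha), hdiff]

theorem padicNorm_add_natCast_le_padicNorm_poch {a : ℚ} {n m : ℕ} (ha : padicNorm p (a + n) < 1)
    (hn : n < p) (hm : m ≤ n + p) : padicNorm p (a + n) ≤ padicNorm p (poch a m) := by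
  have hfactor : ∀ j ∈ range m,
      padicNorm p (a + j) = if j = n then padicNorm p (a + n) else 1 := by
    intro j hj
    split_ifs with hjn
    · rw [hjn]
    · exact padicNorm_add_natCast_eq_one ha hn ((mem_range.1 hj).trans_le hm) hjn
  rw [padicNorm_poch, prod_congr rfl hfactor, prod_ite_eq']
  split_ifs
  exacts [le_rfl, ha.le]

theorem padicNorm_poch_cube_term_sub_le {a x : ℚ} (ha : padicNorm p a ≤ 1)
    (hx : padicNorm p x < 1) {k : ℕ} (hk : k < p) :
    padicNorm p ((-1) ^ k * poch a k ^ 3 / (k.factorial : ℚ) ^ 3 -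
        (-1) ^ k * poch a k * (poch (a + x) k * poch (a - x) k) /
          (k.factorial * (poch (1 + x) k * poch (1 - x) k))) ≤ padicNorm p x ^ 2 := by
  set A := poch (a + x) k * poch (a - x) k
  set B := poch (1 + x) k * poch (1 - x) k
  have hA : padicNorm p (A - poch a k ^ 2) ≤ padicNorm p x ^ 2 :=
    padicNorm_poch_add_mul_poch_sub_sub_le ha hx.le k
  have hB : padicNorm p (B - (k.factorial : ℚ) ^ 2) ≤ padicNorm p x ^ 2 :=
    poch_one k ▸ padicNorm_poch_add_mul_poch_sub_sub_le padicNorm.one.le hx.le k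
  have hB1 : padicNorm p B = 1 := padicNorm_poch_one_add_mul_poch_one_sub hx hk
  have hfact : padicNorm p k.factorial = 1 := padicNorm_factorial hk
  have hpoch : padicNorm p (poch a k) ≤ 1 := padicNorm_poch_le_one ha k
  have hB0 : B ≠ 0 := by rintro h; simp [h] at hB1
  have hcross : (-1) ^ k * poch a k ^ 3 / (k.factorial : ℚ) ^ 3 -
      (-1) ^ k * poch a k * A / (k.factorial * B) =
      (-1) ^ k * poch a k / (k.factorial ^ 3 * B) *
        (poch a k ^ 2 * (B - k.factorial ^ 2) - k.factorial ^ 2 * (A - poch a k ^ 2)) := by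
    have := k.factorial_ne_zero
    field_simp
    ring
  have hcoeff : padicNorm p ((-1) ^ k * poch a k / (k.factorial ^ 3 * B)) ≤ 1 := by
    simpa [padicNorm.div, padicNorm.mul, padicNorm_pow, padicNorm.neg, hfact, hB1] using hpoch
  rw [hcross, padicNorm.mul]
  refine (mul_le_of_le_one_left (padicNorm.nonneg _) hcoeff).trans
    (padicNorm.sub.trans (max_le ?_ ?_))
  · rw [padicNorm.mul, padicNorm_pow]
    exact (mul_le_of_le_one_left (padicNorm.nonneg _)
      (pow_le_one₀ (padicNorm.nonneg _) hpoch)).trans hB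
  · rw [padicNorm.mul, padicNorm_pow, hfact, one_pow, one_mul]
    exact hA

theorem inv_mul_poch_sq_mul_poch_half_div (a : ℚ) (k : ℕ) :
    a⁻¹ * (poch a k ^ 2 * poch (1 / 2) k /
        (k.factorial * poch ((1 + a) / 2) k * poch (1 + a / 2) k)) =
      k.centralBinom * poch a k ^ 2 / poch a (2 * k + 1) := by
  have hfact : (k.factorial : ℚ) ≠ 0 := mod_cast k.factorial_ne_zero
  have hden : poch a (2 * k + 1) =
      4 ^ k * (a * (poch ((1 + a) / 2) k * poch (1 + a / 2) k)) := by
    rw [poch_succ_left, poch_two_mul, add_comm a, show (1 + a + 1) / 2 = 1 + a / 2 by ring]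
    ring
  have hhalf : poch (1 / 2) k = k.factorial * k.centralBinom / 4 ^ k := by
    rw [eq_div_iff (by positivity), poch_half_mul_four_pow]
  rw [hden, hhalf]
  field_simp

theorem padicNorm_mul_centralBinom_term_sub_le {a : ℚ} {n k : ℕ} (ha : padicNorm p (a + n) < 1)
    (hn : n < p) (hk : k ≤ n) :
    padicNorm p ((a + n) *
        (k.centralBinom * (poch (a + (a + n)) k * poch (a - (a + n)) k) / poch a (2 * k + 1) -
          k.centralBinom * poch a k ^ 2 / poch a (2 * k + 1))) ≤ padicNorm p (a + n) ^ 2 := by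
  have ha1 : padicNorm p a ≤ 1 := padicNorm_le_one_of_add_natCast ha.le
  have hden : padicNorm p ((a + n) / poch a (2 * k + 1)) ≤ 1 := by
    rw [padicNorm.div]
    exact div_le_one_of_le₀ (padicNorm_add_natCast_le_padicNorm_poch ha hn (by lia))
      (padicNorm.nonneg _)
  rw [show (a + n) *
      (k.centralBinom * (poch (a + (a + n)) k * poch (a - (a + n)) k) / poch a (2 * k + 1) -
        k.centralBinom * poch a k ^ 2 / poch a (2 * k + 1)) =
      (a + n) / poch a (2 * k + 1) * k.centralBinom *
        (poch (a + (a + n)) k * poch (a - (a + n)) k - poch a k ^ 2) by ring,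
    padicNorm.mul, padicNorm.mul]
  exact (mul_le_of_le_one_left (padicNorm.nonneg _)
    (mul_le_one₀ hden (padicNorm.nonneg _) (padicNorm.of_nat _))).trans
      (padicNorm_poch_add_mul_poch_sub_sub_le ha1 ha.le k)

theorem padicNorm_natCast_div_three (hp : p % 3 = 2) :
    padicNorm p (p / 3 : ℚ) = (p : ℚ)⁻¹ := by
  have h3 : padicNorm p (3 : ℕ) = 1 := by
    rw [padicNorm.nat_eq_one_iff, Nat.prime_dvd_prime_iff_eq Fact.out Nat.prime_three]
    rintro rfl
    contradiction
  rw [Nat.cast_ofNat] at h3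
  rw [padicNorm.div, padicNorm.padicNorm_p_of_prime, h3, div_one]

end padicNorm

theorem stmt9_general {p : ℕ} [Fact p.Prime] {a : ℚ} {n : ℕ} (hn : n < p) (h0 : a + n ≠ 0)
    (ha : padicNorm p (a + n) < 1) :
    padicNorm p (∑ k ∈ range (n + 1), (-1) ^ k * poch a k ^ 3 / (k.factorial : ℚ) ^ 3 -
        (-1) ^ n * ((a + n) / a) * ∑ k ∈ range (n + 1), poch a k ^ 2 * poch (1 / 2) k /
          (k.factorial * poch ((1 + a) / 2) k * poch (1 + a / 2) k)) ≤
      padicNorm p (a + n) ^ 2 := by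
  have ha1 : padicNorm p a ≤ 1 := padicNorm_le_one_of_add_natCast ha.le
  have hden : poch a (2 * n + 1) ≠ 0 := fun h => by
    have := padicNorm_add_natCast_le_padicNorm_poch ha hn (show 2 * n + 1 ≤ n + p by lia)
    rw [h, padicNorm.zero] at this
    exact h0 (padicNorm.zero_of_padicNorm_eq_zero (this.antisymm (padicNorm.nonneg _)))
  have hsum : (a + n) / a * ∑ k ∈ range (n + 1), poch a k ^ 2 * poch (1 / 2) k /
        (k.factorial * poch ((1 + a) / 2) k * poch (1 + a / 2) k) =
      ∑ k ∈ range (n + 1), (a + n) * (k.centralBinom * poch a k ^ 2 / poch a (2 * k + 1)) := by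
    rw [div_eq_mul_inv, mul_assoc, mul_sum, mul_sum]
    exact sum_congr rfl fun k _ => by rw [inv_mul_poch_sq_mul_poch_half_div]
  have hsign : padicNorm p ((-1) ^ n) = 1 := by
    rw [padicNorm_pow, padicNorm.neg, padicNorm.one, one_pow]
  rw [mul_assoc, hsum, ← sub_add_sub_cancel _ (∑ k ∈ range (n + 1), (-1) ^ k * poch a k *
      (poch (a + (a + n)) k * poch (a - (a + n)) k) /
        (k.factorial * (poch (1 + (a + n)) k * poch (1 - (a + n)) k))),
    ← sum_sub_distrib]
  refine padicNorm.nonarchimedean.trans (max_le ?_ ?_)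
  · exact padicNorm.sum_le' (fun k hk => padicNorm_poch_cube_term_sub_le ha1 ha
      ((mem_range_succ_iff.1 hk).trans_lt hn)) (sq_nonneg _)
  · rw [sum_poch_add_mul_poch_sub_eq hden rfl, mul_assoc, ← mul_sub, mul_sum, ← sum_sub_distrib,
      padicNorm.mul, hsign, one_mul]
    simp only [← mul_sub]
    exact padicNorm.sum_le' (fun k hk => padicNorm_mul_centralBinom_term_sub_le ha hn
      (mem_range_succ_iff.1 hk)) (sq_nonneg _)

theorem stmt9 (p : ℕ) [Fact p.Prime] (hodd : Odd p) (hp3 : p % 3 = 2) :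
    ‖(((∑ k ∈ Finset.range ((p + 1) / 3 + 1),
          (-1 : ℚ) ^ k * poch (-1/3) k ^ 3 / ((k.factorial : ℚ)) ^ 3) -
        (-(-1 : ℚ) ^ ((p + 1) / 3) * p *
          ∑ k ∈ Finset.range ((p + 1) / 3 + 1),
            poch (-1/3) k ^ 2 * poch (1/2) k /
              ((k.factorial : ℚ) * poch (1/3) k * poch (5/6) k)) : ℚ) : ℚ_[p])‖ ≤
      (p : ℝ) ^ (-2 : ℤ) := by
  have hp : 1 < p := (Fact.out : p.Prime).one_lt
  have hx := neg_one_third_add_natCast_div_three hp3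
  have hnorm := padicNorm_natCast_div_three hp3
  have h := stmt9_general (p := p) (a := -1 / 3) (n := (p + 1) / 3) (by lia)
    (by rw [hx]; positivity) (by rw [hx, hnorm]; exact inv_lt_one_of_one_lt₀ (mod_cast hp))
  rw [hx, hnorm, show (p : ℚ) / 3 / (-1 / 3) = -p by ring,
    show ((1 : ℚ) + -1 / 3) / 2 = 1 / 3 by norm_num,
    show (1 : ℚ) + -1 / 3 / 2 = 5 / 6 by norm_num, mul_neg, ← neg_mul] at h
  rw [Padic.eq_padicNorm]
  exact (Rat.cast_le.2 h).trans_eq (by push_cast; rw [inv_pow, zpow_neg]; rfl)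
end

section
/- Let p be a prime with p ≡ 1 (mod 3) (and p odd). Then Σ_{k=0}^{(p−1)/3} (−1)^k (1/3)_k^3 / k!^3 ≡ (−1)^{(p−1)/3} · p · Σ_{k=0}^{(p−1)/3} (1/3)_k^2 (1/2)_k / (k! (2/3)_k (7/6)_k) (mod p^2). -/
open Finset

/-!
Put `t = a + n`; for `a = 1 / 3` and `n = (p - 1) / 3` this is `p / 3`. As `a - t = -n`, the
well-poised series `∑ (-1)^k (a)_k (a + t)_k (a - t)_k / (k! (1 + t)_k (1 - t)_k)` stops at `k = n`.
Summing one double series first by rows and then by columns, with Chu–Vandermonde for both inner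
sums, shows that it equals
`(-1)^n (t / a) ∑ (a + t)_k (a - t)_k (1 + k)_k / (k! (1 + a)_{2k})`.
Since `(x + t)_k (x - t)_k ≡ (x)_k² mod t²`, replacing `a ± t` by `a` and `1 ± t` by `1` changes
either side only by a multiple of `t²`: on the right the zero of the prefactor at `t = 0` outweighs
the vanishing of `(1 + a)_{2k}`, because `(1 + a)_n = (-1)^n (t / a) (1 - t)_n`.
-/

theorem sum_antidiagonal_sum_antidiagonal_assoc {A M : Type*} [AddMonoid A] [HasAntidiagonal A]
    [AddCommMonoid M] (f : A → A → A → M) (n : A) :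
    ∑ x ∈ antidiagonal n, ∑ y ∈ antidiagonal x.2, f x.1 y.1 y.2 =
      ∑ x ∈ antidiagonal n, ∑ y ∈ antidiagonal x.1, f y.1 y.2 x.2 := by
  simp only [sum_sigma']
  refine sum_nbij' (fun ⟨⟨i, _⟩, ⟨k, l⟩⟩ ↦ ⟨(i + k, l), (i, k)⟩)
    (fun ⟨⟨_, j⟩, ⟨k, l⟩⟩ ↦ ⟨(k, l + j), (l, j)⟩) ?_ ?_ ?_ ?_ ?_ <;>
    rintro ⟨⟨i, j⟩, k, l⟩ h <;>
    simp only [mem_sigma, HasAntidiagonal.mem_antidiagonal] at h <;>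
    obtain ⟨rfl, rfl⟩ := h
  · simp [add_assoc]
  · simp [add_assoc]
  all_goals rfl

section Hypergeometric

open Polynomial
open scoped Nat

local notation "⦅" a "⦆_" k:max => Polynomial.eval a (ascPochhammer _ k)

section CommRing

variable {R : Type*} [CommRing R]

theorem ascPochhammer_eval_add (x : R) (m n : ℕ) : ⦅x⦆_(m + n) = ⦅x⦆_m * ⦅x + m⦆_n := by
  simp [← ascPochhammer_mul]

theorem mul_ascPochhammer_eval_one_add (x : R) (n : ℕ) :
    x * ⦅1 + x⦆_n = ⦅x⦆_n * (x + n) := by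
  rw [← ascPochhammer_succ_eval, add_comm n, ascPochhammer_eval_add, ascPochhammer_one, eval_X,
    Nat.cast_one, add_comm 1]

theorem ascPochhammer_eval_sub_natCast (x : R) (n : ℕ) :
    ⦅x - n⦆_n = (-1) ^ n * ⦅1 - x⦆_n := by
  rw [← neg_sub, ascPochhammer_eval_neg_eq_descPochhammer, descPochhammer_eval_eq_ascPochhammer]
  ring_nf

theorem mul_ascPochhammer_eval_one_add_eq_one_sub (x : R) (n : ℕ) :
    x * ⦅1 + x⦆_n = (-1) ^ n * (x + n) * ⦅1 - (x + n)⦆_n := by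
  have h := ascPochhammer_eval_sub_natCast (x + n) n
  rw [add_sub_cancel_right] at h
  rw [mul_ascPochhammer_eval_one_add, h]
  ring

theorem ascPochhammer_eval_neg_add_natCast (k l : ℕ) :
    ⦅-((k + l : ℕ) : R)⦆_k * (l ! : R) = (-1) ^ k * ((k + l)! : R) := by
  rw [ascPochhammer_eval_neg_eq_descPochhammer, descPochhammer_eval_eq_descFactorial, mul_assoc,
    ← Nat.cast_mul, mul_comm (Nat.descFactorial _ _), ← Nat.factorial_mul_descFactorial
      (Nat.le_add_right k l), Nat.add_sub_cancel_left]

theorem sum_antidiagonal_choose_mul_ascPochhammer_eval (b c : R) (n : ℕ) :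
    ∑ x ∈ antidiagonal n, (-1) ^ x.1 * (n.choose x.1 : R) * ⦅b⦆_x.1 * ⦅c + x.1⦆_x.2 =
      ⦅c - b⦆_n := by
  have h := Ring.descPochhammer_smeval_add n (Commute.all (-b) (c + n - 1))
  simp only [← aeval_eq_smeval, aeval_def, eval₂_eq_eval_map, descPochhammer_map] at h
  rw [show c - b = -b + (c + n - 1) - n + 1 by ring, ← descPochhammer_eval_eq_ascPochhammer, h]
  refine sum_congr rfl ?_
  rintro ⟨i, l⟩ hil
  obtain rfl := mem_antidiagonal.1 hil
  have hb : (-1) ^ i * ⦅b⦆_i = (descPochhammer R i).eval (-b) := by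
    rw [← neg_neg b, ascPochhammer_eval_neg_eq_descPochhammer, neg_neg, ← mul_assoc, ← mul_pow]
    simp
  have hc : ⦅c + i⦆_l = (descPochhammer R l).eval (c + (i + l : ℕ) - 1) := by
    rw [descPochhammer_eval_eq_ascPochhammer]
    congr 1
    push_cast
    ring
  rw [← hb, hc]
  ring

end CommRing

section Field

variable {K : Type*} [Field K]

theorem ascPochhammer_eval_ne_zero_of_le {x : K} {m n : ℕ} (hmn : m ≤ n) (h : ⦅x⦆_n ≠ 0) :
    ⦅x⦆_m ≠ 0 := by
  obtain ⟨l, rfl⟩ := Nat.exists_eq_add_of_le hmn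
  exact left_ne_zero_of_mul (ascPochhammer_eval_add x m l ▸ h)

theorem ascPochhammer_eval_one_add_div {a : K} (n : ℕ) (ha : a ≠ 0) (h : ⦅1 - (a + n)⦆_n ≠ 0) :
    ⦅1 + a⦆_n / ⦅1 - (a + n)⦆_n = (-1) ^ n * ((a + n) / a) := by
  rw [← mul_div_assoc, div_eq_div_iff h ha, mul_comm _ a, mul_ascPochhammer_eval_one_add_eq_one_sub]

variable [CharZero K]

theorem ascPochhammer_eval_two_mul (x : K) (n : ℕ) :
    ⦅x⦆_(2 * n) = 4 ^ n * (⦅x / 2⦆_n * ⦅(x + 1) / 2⦆_n) := by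
  induction n with
  | zero => simp
  | succ n ih =>
    simp only [mul_add_one, ascPochhammer_succ_eval, ih, show 2 * n + 2 = 2 * n + 1 + 1 from rfl]
    push_cast
    ring

theorem ascPochhammer_eval_one_add_natCast_self (n : ℕ) :
    ⦅(1 + n : K)⦆_n = 4 ^ n * ⦅(1 / 2 : K)⦆_n := by
  have h : (n ! : K) * ⦅(1 + n : K)⦆_n = n ! * (4 ^ n * ⦅(1 / 2 : K)⦆_n) := by
    rw [← ascPochhammer_eval_one, ← ascPochhammer_eval_add, ← two_mul, ascPochhammer_eval_two_mul,
      one_add_one_eq_two, div_self two_ne_zero]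
    ring
  exact mul_left_cancel₀ (Nat.cast_ne_zero.2 n.factorial_ne_zero) h

theorem ascPochhammer_eval_half_div (a : K) (n : ℕ) :
    ⦅(1 / 2 : K)⦆_n / (⦅(a + 1) / 2⦆_n * ⦅a / 2 + 1⦆_n) =
      ⦅(1 + n : K)⦆_n / ⦅1 + a⦆_(2 * n) := by
  rw [ascPochhammer_eval_one_add_natCast_self, ascPochhammer_eval_two_mul,
    mul_div_mul_left _ _ (pow_ne_zero n (OfNat.ofNat_ne_zero 4 : (4 : K) ≠ 0)), add_comm 1 a,
    show (a + 1 + 1) / 2 = a / 2 + 1 by ring]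

theorem sum_antidiagonal_ascPochhammer_eval_div (b : K) {c : K} {n : ℕ} (hc : ⦅c⦆_n ≠ 0) :
    ∑ x ∈ antidiagonal n, (-1) ^ x.1 * ⦅b⦆_x.1 / (x.1! * x.2! * ⦅c⦆_x.1) =
      ⦅c - b⦆_n / (n ! * ⦅c⦆_n) := by
  rw [← sum_antidiagonal_choose_mul_ascPochhammer_eval b c n, sum_div]
  refine sum_congr rfl ?_
  rintro ⟨i, l⟩ hil
  obtain rfl := mem_antidiagonal.1 hil
  dsimp only at hc ⊢
  rw [ascPochhammer_eval_add] at hc ⊢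
  have hci := left_ne_zero_of_mul hc
  have hcl := right_ne_zero_of_mul hc
  have hfac : ((i + l)! : K) ≠ 0 := Nat.cast_ne_zero.2 (i + l).factorial_ne_zero
  rw [Nat.cast_add_choose]
  field_simp

theorem sum_antidiagonal_ascPochhammer_eval_add_div (A d : K) (r n : ℕ) (hA : ⦅A⦆_(2 * r + n) ≠ 0) :
    ∑ x ∈ antidiagonal n, (-1) ^ x.1 * ⦅d⦆_(r + x.1) / (x.1! * x.2! * ⦅A⦆_(2 * r + x.1)) =
      ⦅d⦆_r * ⦅A - d + r⦆_n / (n ! * ⦅A⦆_(2 * r + n)) := by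
  simp only [ascPochhammer_eval_add _ r, ascPochhammer_eval_add _ (2 * r)] at hA ⊢
  have h := sum_antidiagonal_ascPochhammer_eval_div (d + r) (right_ne_zero_of_mul hA)
  rw [show A + (2 * r : ℕ) - (d + r) = A - d + r by push_cast; ring] at h
  calc _ = ∑ x ∈ antidiagonal n, ⦅d⦆_r / ⦅A⦆_(2 * r) *
          ((-1) ^ x.1 * ⦅d + r⦆_x.1 / (x.1! * x.2! * ⦅A + (2 * r : ℕ)⦆_x.1)) :=
        sum_congr rfl fun x _ ↦ by ring
    _ = _ := by rw [← mul_sum, h]; ring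

theorem sum_antidiagonal_ascPochhammer_eval_div_two_mul_add (a : K) (n : ℕ)
    (ha : ⦅1 + a⦆_(2 * n) ≠ 0) :
    ∑ x ∈ antidiagonal n, (-1) ^ x.2 * ⦅a⦆_x.1 / (x.1! * x.2! * ⦅1 + a⦆_(2 * x.1 + x.2)) =
      (-1) ^ n * ⦅(1 + n : K)⦆_n / (n ! * ⦅1 + a⦆_(2 * n)) := by
  rw [two_mul, ascPochhammer_eval_add] at ha ⊢
  have h := sum_antidiagonal_ascPochhammer_eval_div a (right_ne_zero_of_mul ha)
  rw [show 1 + a + n - a = 1 + n by ring] at h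
  calc _ = ∑ x ∈ antidiagonal n, (-1) ^ n / ⦅1 + a⦆_n *
          ((-1) ^ x.1 * ⦅a⦆_x.1 / (x.1! * x.2! * ⦅1 + a + n⦆_x.1)) := by
        refine sum_congr rfl ?_
        rintro ⟨i, l⟩ hil
        obtain rfl := mem_antidiagonal.1 hil
        have hsign : (-1 : K) ^ (i + l) * (-1) ^ i = (-1) ^ l := by
          rw [pow_add, mul_right_comm, ← mul_pow]
          simp
        rw [show 2 * i + l = i + l + i by ring, ascPochhammer_eval_add _ (i + l), ← hsign]
        ring
    _ = _ := by rw [← mul_sum, h]; ring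

theorem sum_antidiagonal_wellPoised (a d : K) (n : ℕ) (ha : ⦅1 + a⦆_(2 * n) ≠ 0)
    (hd : ⦅1 + a - d⦆_n ≠ 0) :
    ∑ x ∈ antidiagonal n, ⦅a⦆_x.1 * ⦅d⦆_x.1 /
        (x.1! * x.2! * ⦅1 + a - d⦆_x.1 * ⦅1 + a⦆_(n + x.1)) =
      1 / ⦅1 + a - d⦆_n * ∑ x ∈ antidiagonal n, (-1) ^ x.1 * ⦅d⦆_x.1 * ⦅(1 + x.1 : K)⦆_x.1 /
        (x.1! * x.2! * ⦅1 + a⦆_(2 * x.1)) := by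
  let f (r i l : ℕ) : K :=
    (-1) ^ i * ⦅a⦆_r * ⦅d⦆_(r + i) / (r ! * i ! * l ! * ⦅1 + a⦆_(2 * r + i))
  rw [eq_comm, one_div_mul_eq_div, div_eq_iff hd, sum_mul]
  calc _ = ∑ x ∈ antidiagonal n, ∑ y ∈ antidiagonal x.1, f y.1 y.2 x.2 := by
        refine sum_congr rfl ?_
        rintro ⟨j, l⟩ hjl
        obtain rfl := mem_antidiagonal.1 hjl
        have haj : ⦅1 + a⦆_(2 * j) ≠ 0 := ascPochhammer_eval_ne_zero_of_le (by omega) ha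
        calc _ = ⦅d⦆_j / l ! *
              ((-1) ^ j * ⦅(1 + j : K)⦆_j / (j ! * ⦅1 + a⦆_(2 * j))) := by ring
          _ = _ := by
            rw [← sum_antidiagonal_ascPochhammer_eval_div_two_mul_add a j haj, mul_sum]
            refine sum_congr rfl fun y hy ↦ ?_
            dsimp only [f]
            rw [mem_antidiagonal.1 hy]
            ring
    _ = ∑ x ∈ antidiagonal n, ∑ y ∈ antidiagonal x.2, f x.1 y.1 y.2 :=
        (sum_antidiagonal_sum_antidiagonal_assoc f n).symm
    _ = _ := by
        refine sum_congr rfl ?_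
        rintro ⟨r, l⟩ hrl
        obtain rfl := mem_antidiagonal.1 hrl
        rw [show 2 * (r + l) = r + l + r + l by ring] at ha
        calc _ = ⦅a⦆_r / r ! * (⦅d⦆_r * ⦅1 + a - d + r⦆_l / (l ! * ⦅1 + a⦆_(2 * r + l))) := by
              rw [← sum_antidiagonal_ascPochhammer_eval_add_div _ d r l
                (ascPochhammer_eval_ne_zero_of_le (by omega) ha), mul_sum]
              refine sum_congr rfl fun y _ ↦ ?_
              dsimp only [f]
              ring
          _ = _ := by
              dsimp only
              rw [ascPochhammer_eval_add (1 + a - d)] at hd ⊢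
              have hdr := left_ne_zero_of_mul hd
              rw [show r + l + r = 2 * r + l by ring]
              field_simp

theorem sum_range_wellPoised (a d : K) (n : ℕ) (ha : ⦅1 + a⦆_(2 * n) ≠ 0)
    (hd : ⦅1 + a - d⦆_n ≠ 0) :
    ∑ k ∈ range (n + 1), (-1) ^ k * ⦅a⦆_k * (⦅d⦆_k * ⦅(-n : K)⦆_k) /
        (k ! * (⦅1 + a + n⦆_k * ⦅1 + a - d⦆_k)) =
      ⦅1 + a⦆_n / ⦅1 + a - d⦆_n *
        ∑ k ∈ range (n + 1), ⦅d⦆_k * ⦅(-n : K)⦆_k * ⦅(1 + k : K)⦆_k / (k ! * ⦅1 + a⦆_(2 * k)) := by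
  have han : ⦅1 + a⦆_n ≠ 0 := ascPochhammer_eval_ne_zero_of_le (by omega) ha
  have hfac (m : ℕ) : (m ! : K) ≠ 0 := Nat.cast_ne_zero.2 m.factorial_ne_zero
  have hneg {k l : ℕ} : ⦅-((k + l : ℕ) : K)⦆_k = (-1) ^ k * (k + l)! / l ! :=
    eq_div_of_mul_eq (hfac l) (ascPochhammer_eval_neg_add_natCast k l)
  have h := sum_antidiagonal_wellPoised a d n ha hd
  simp only [Nat.sum_antidiagonal_eq_sum_range_succ_mk] at h
  calc _ = n ! * ⦅1 + a⦆_n * ∑ k ∈ range (n + 1), ⦅a⦆_k * ⦅d⦆_k /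
        (k ! * (n - k)! * ⦅1 + a - d⦆_k * ⦅1 + a⦆_(n + k)) := by
        rw [mul_sum]
        refine sum_congr rfl fun k hk ↦ ?_
        obtain ⟨l, rfl⟩ := Nat.exists_eq_add_of_le (mem_range_succ_iff.1 hk)
        rw [hneg, ascPochhammer_eval_add _ (k + l), Nat.add_sub_cancel_left]
        field_simp
        rw [← pow_mul, mul_comm k 2, pow_mul, neg_one_sq, one_pow, one_mul]
    _ = _ := by
        rw [h, mul_sum, mul_sum, mul_sum]
        refine sum_congr rfl fun k hk ↦ ?_
        obtain ⟨l, rfl⟩ := Nat.exists_eq_add_of_le (mem_range_succ_iff.1 hk)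
        rw [hneg, Nat.add_sub_cancel_left]
        ring

end Field

section Ultrametric

variable {K : Type*} [NormedField K] [IsUltrametricDist K]

open IsUltrametricDist

theorem norm_natCast_eq_one_of_dvd {m n : ℕ} (hmn : m ∣ n) (hn : ‖(n : K)‖ = 1) :
    ‖(m : K)‖ = 1 := by
  obtain ⟨c, rfl⟩ := hmn
  rw [Nat.cast_mul, norm_mul] at hn
  refine (norm_natCast_le_one K m).antisymm ?_
  rw [← hn]
  exact mul_le_of_le_one_right (norm_nonneg _) (norm_natCast_le_one K c)

theorem norm_add_eq_left_of_norm_lt {x y : K} (h : ‖y‖ < ‖x‖) : ‖x + y‖ = ‖x‖ := by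
  rw [norm_add_eq_max_of_norm_ne_norm h.ne', max_eq_left h.le]

theorem norm_sub_le_max (x y : K) : ‖x - y‖ ≤ max ‖x‖ ‖y‖ := by
  simpa only [sub_eq_add_neg, norm_neg] using norm_add_le_max x (-y)

theorem norm_div_sub_div_le {x x' y y' : K} {ε : ℝ} (hx : ‖x - x'‖ ≤ ε) (hy : ‖y - y'‖ ≤ ε)
    (hx' : ‖x'‖ ≤ 1) (hy1 : ‖y‖ = 1) (hy1' : ‖y'‖ = 1) : ‖x / y - x' / y'‖ ≤ ε := by
  have hy0 : y ≠ 0 := norm_pos_iff.1 (hy1 ▸ one_pos)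
  have hy0' : y' ≠ 0 := norm_pos_iff.1 (hy1' ▸ one_pos)
  have hsplit : x / y - x' / y' = ((x - x') * y' - x' * (y - y')) / (y * y') := by
    field_simp
    ring
  rw [hsplit, norm_div, norm_mul y, hy1, hy1', mul_one, div_one]
  refine (norm_sub_le_max _ _).trans (max_le ?_ ?_)
  · rwa [norm_mul, hy1', mul_one]
  · rw [norm_mul]
    exact (mul_le_of_le_one_left (norm_nonneg _) hx').trans hy

theorem norm_ascPochhammer_eval_le_one {x : K} (hx : ‖x‖ ≤ 1) (k : ℕ) : ‖⦅x⦆_k‖ ≤ 1 := by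
  induction k with
  | zero => simp
  | succ k ih =>
    rw [ascPochhammer_succ_eval, norm_mul]
    exact mul_le_one₀ ih (norm_nonneg _)
      ((norm_add_le_max _ _).trans (max_le hx (norm_natCast_le_one K k)))

theorem norm_ascPochhammer_eval_le_of_le {x : K} (hx : ‖x‖ ≤ 1) {m n : ℕ} (hmn : m ≤ n) :
    ‖⦅x⦆_n‖ ≤ ‖⦅x⦆_m‖ := by
  obtain ⟨l, rfl⟩ := Nat.exists_eq_add_of_le hmn
  rw [ascPochhammer_eval_add, norm_mul]
  exact mul_le_of_le_one_right (norm_nonneg _) (norm_ascPochhammer_eval_le_one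
    ((norm_add_le_max _ _).trans (max_le hx (norm_natCast_le_one K m))) l)

theorem norm_ascPochhammer_eval_one_add_le {a : K} {k n : ℕ} (ha : ‖a‖ ≤ 1)
    (hn : ‖⦅1 + a + n⦆_n‖ = 1) (hk : k ≤ n) : ‖⦅1 + a⦆_n‖ ≤ ‖⦅1 + a⦆_(2 * k)‖ :=
  calc ‖⦅1 + a⦆_n‖ = ‖⦅1 + a⦆_(2 * n)‖ := by
        rw [two_mul, ascPochhammer_eval_add, norm_mul, hn, mul_one]
    _ ≤ ‖⦅1 + a⦆_(2 * k)‖ := norm_ascPochhammer_eval_le_of_le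
        ((norm_add_le_max 1 a).trans (max_le norm_one.le ha)) (by omega)

theorem norm_ascPochhammer_eval_one_add {s : K} {k : ℕ} (hs : ‖s‖ < 1) (hk : ‖(k ! : K)‖ = 1) :
    ‖⦅1 + s⦆_k‖ = 1 := by
  induction k with
  | zero => simp
  | succ k ih =>
    have hk1 : ‖((k + 1 : ℕ) : K)‖ = 1 :=
      norm_natCast_eq_one_of_dvd (Nat.dvd_factorial k.succ_pos le_rfl) hk
    have hfac : ‖(k ! : K)‖ = 1 :=
      norm_natCast_eq_one_of_dvd (Nat.factorial_dvd_factorial k.le_succ) hk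
    rw [ascPochhammer_succ_eval, norm_mul, ih hfac, one_mul,
      show 1 + s + k = ((k + 1 : ℕ) : K) + s by push_cast; ring,
      norm_add_eq_left_of_norm_lt (hk1.symm ▸ hs), hk1]

theorem norm_ascPochhammer_eval_sq_sub_le {x t : K} (hx : ‖x‖ ≤ 1) (ht : ‖t‖ ≤ 1) (k : ℕ) :
    ‖⦅x⦆_k ^ 2 - ⦅x + t⦆_k * ⦅x - t⦆_k‖ ≤ ‖t‖ ^ 2 := by
  induction k with
  | zero => simp
  | succ k ih =>
    have hxk : ‖x + k‖ ≤ 1 :=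
      (norm_add_le_max _ _).trans (max_le hx (norm_natCast_le_one K k))
    have hadd := norm_ascPochhammer_eval_le_one ((norm_add_le_max x t).trans (max_le hx ht)) k
    have hsub := norm_ascPochhammer_eval_le_one ((norm_sub_le_max x t).trans (max_le hx ht)) k
    have hsplit : ⦅x⦆_(k + 1) ^ 2 - ⦅x + t⦆_(k + 1) * ⦅x - t⦆_(k + 1) =
        (⦅x⦆_k ^ 2 - ⦅x + t⦆_k * ⦅x - t⦆_k) * (x + k) ^ 2 + ⦅x + t⦆_k * ⦅x - t⦆_k * t ^ 2 := by
      simp only [ascPochhammer_succ_eval]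
      ring
    rw [hsplit]
    refine (norm_add_le_max _ _).trans (max_le ?_ ?_) <;> simp only [norm_mul, norm_pow]
    · exact (mul_le_of_le_one_right (norm_nonneg _) (pow_le_one₀ (norm_nonneg _) hxk)).trans ih
    · exact mul_le_of_le_one_left (by positivity) (mul_le_one₀ hadd (norm_nonneg _) hsub)

theorem norm_sum_ascPochhammer_cube_sub_le {a t : K} {n : ℕ} (ha : ‖a‖ ≤ 1) (ht : ‖t‖ < 1)
    (hn : ‖(n ! : K)‖ = 1) :
    ‖∑ k ∈ range (n + 1), (-1) ^ k * ⦅a⦆_k ^ 3 / (k ! : K) ^ 3 -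
      ∑ k ∈ range (n + 1), (-1) ^ k * ⦅a⦆_k * (⦅a + t⦆_k * ⦅a - t⦆_k) /
        (k ! * (⦅1 + t⦆_k * ⦅1 - t⦆_k))‖ ≤ ‖t‖ ^ 2 := by
  rw [← sum_sub_distrib]
  refine norm_sum_le_of_forall_le_of_nonneg (by positivity) fun k hk ↦ ?_
  have hfac : ‖(k ! : K)‖ = 1 :=
    norm_natCast_eq_one_of_dvd (Nat.factorial_dvd_factorial (mem_range_succ_iff.1 hk)) hn
  have hquot : ‖⦅a⦆_k ^ 2 / (k ! : K) ^ 2 -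
      ⦅a + t⦆_k * ⦅a - t⦆_k / (⦅1 + t⦆_k * ⦅1 - t⦆_k)‖ ≤ ‖t‖ ^ 2 := by
    refine norm_div_sub_div_le (norm_ascPochhammer_eval_sq_sub_le ha ht.le k) ?_ ?_ ?_ ?_
    · rw [← ascPochhammer_eval_one]
      exact norm_ascPochhammer_eval_sq_sub_le norm_one.le ht.le k
    · rw [norm_mul]
      exact mul_le_one₀
        (norm_ascPochhammer_eval_le_one ((norm_add_le_max a t).trans (max_le ha ht.le)) k)
        (norm_nonneg _)
        (norm_ascPochhammer_eval_le_one ((norm_sub_le_max a t).trans (max_le ha ht.le)) k)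
    · rw [norm_pow, hfac, one_pow]
    · rw [norm_mul, sub_eq_add_neg, norm_ascPochhammer_eval_one_add ht hfac,
        norm_ascPochhammer_eval_one_add ((norm_neg t).trans_lt ht) hfac, one_mul]
  calc _ = ‖(-1) ^ k * ⦅a⦆_k / (k ! : K) * (⦅a⦆_k ^ 2 / (k ! : K) ^ 2 -
        ⦅a + t⦆_k * ⦅a - t⦆_k / (⦅1 + t⦆_k * ⦅1 - t⦆_k))‖ := by
        congr 1
        ring
    _ ≤ ‖t‖ ^ 2 := by
        rw [norm_mul]
        refine (mul_le_of_le_one_left (norm_nonneg _) ?_).trans hquot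
        simpa [hfac] using norm_ascPochhammer_eval_le_one ha k

theorem norm_mul_sum_sub_mul_sum_le {a t c : K} {n : ℕ} (ha : ‖a‖ ≤ 1) (ht : ‖t‖ ≤ 1)
    (hn : ‖(n ! : K)‖ = 1) (hc : ∀ k ≤ n, ‖c / ⦅1 + a⦆_(2 * k)‖ ≤ 1) :
    ‖c * ∑ k ∈ range (n + 1), ⦅a + t⦆_k * ⦅a - t⦆_k * ⦅(1 + k : K)⦆_k / (k ! * ⦅1 + a⦆_(2 * k)) -
      c * ∑ k ∈ range (n + 1), ⦅a⦆_k ^ 2 * ⦅(1 + k : K)⦆_k / (k ! * ⦅1 + a⦆_(2 * k))‖ ≤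
      ‖t‖ ^ 2 := by
  rw [← mul_sub, ← sum_sub_distrib, mul_sum]
  refine norm_sum_le_of_forall_le_of_nonneg (by positivity) fun k hk ↦ ?_
  rw [mem_range_succ_iff] at hk
  have hfac : ‖(k ! : K)‖ = 1 :=
    norm_natCast_eq_one_of_dvd (Nat.factorial_dvd_factorial hk) hn
  have hk1 : ‖(1 + k : K)‖ ≤ 1 := by
    simpa [add_comm] using norm_natCast_le_one K (k + 1)
  calc _ = ‖⦅a⦆_k ^ 2 - ⦅a + t⦆_k * ⦅a - t⦆_k‖ *
        (‖⦅(1 + k : K)⦆_k‖ / ‖(k ! : K)‖ * ‖c / ⦅1 + a⦆_(2 * k)‖) := by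
        rw [norm_sub_rev, ← norm_div, ← norm_mul, ← norm_mul]
        congr 1
        ring
    _ ≤ ‖t‖ ^ 2 * (1 * 1) := by
        rw [hfac, div_one]
        gcongr
        · exact norm_ascPochhammer_eval_sq_sub_le ha ht k
        · exact norm_ascPochhammer_eval_le_one hk1 k
        · exact hc k hk
    _ = ‖t‖ ^ 2 := by ring

theorem norm_sum_ascPochhammer_cube_sub_mul_sum_le [CharZero K] {a : K} {n : ℕ}
    (hn : ‖(n ! : K)‖ = 1) (hne : a + n ≠ 0) (hlt : ‖a + n‖ < 1) :
    ‖∑ k ∈ range (n + 1), (-1) ^ k * ⦅a⦆_k ^ 3 / (k ! : K) ^ 3 -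
      (-1) ^ n * ((a + n) / a) * ∑ k ∈ range (n + 1), ⦅a⦆_k ^ 2 * ⦅(1 / 2 : K)⦆_k /
        (k ! * ⦅(a + 1) / 2⦆_k * ⦅a / 2 + 1⦆_k)‖ ≤ ‖a + n‖ ^ 2 := by
  obtain ⟨t, ht⟩ : ∃ t, a + n = t := ⟨_, rfl⟩
  have hat : a - t = -n := by rw [← ht]; ring
  have hone : 1 + a - (a + t) = 1 - t := by ring
  have htwo : 1 + a + n = 1 + t := by rw [← ht]; ring
  have hratio := mul_ascPochhammer_eval_one_add_eq_one_sub a n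
  have hcoef := ascPochhammer_eval_one_add_div (a := a) n
  rw [ht] at hne hlt hratio hcoef ⊢
  have ha : ‖a‖ ≤ 1 := by
    rw [eq_sub_of_add_eq ht]
    exact (norm_sub_le_max _ _).trans (max_le hlt.le (norm_natCast_le_one K n))
  have hadd : ‖⦅1 + t⦆_n‖ = 1 := norm_ascPochhammer_eval_one_add hlt hn
  have hsub : ‖⦅1 - t⦆_n‖ = 1 := by
    rw [sub_eq_add_neg]
    exact norm_ascPochhammer_eval_one_add ((norm_neg t).trans_lt hlt) hn
  have hadd0 : ⦅1 + t⦆_n ≠ 0 := norm_pos_iff.1 (hadd ▸ one_pos)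
  have hsub0 : ⦅1 - t⦆_n ≠ 0 := norm_pos_iff.1 (hsub ▸ one_pos)
  have hratio0 : a * ⦅1 + a⦆_n ≠ 0 := hratio ▸ mul_ne_zero (by simpa using hne) hsub0
  have hden0 : ⦅1 + a⦆_(2 * n) ≠ 0 := by
    rw [two_mul, ascPochhammer_eval_add, htwo]
    exact mul_ne_zero (right_ne_zero_of_mul hratio0) hadd0
  have hcoef1 (k : ℕ) (hk : k ≤ n) : ‖⦅1 + a⦆_n / ⦅1 - t⦆_n / ⦅1 + a⦆_(2 * k)‖ ≤ 1 := by
    rw [norm_div, norm_div, hsub, div_one]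
    exact div_le_one_of_le₀ (norm_ascPochhammer_eval_one_add_le ha (htwo ▸ hadd) hk)
      (norm_nonneg _)
  have hleft := norm_sum_ascPochhammer_cube_sub_le ha hlt hn
  have hright := norm_mul_sum_sub_mul_sum_le ha hlt.le hn hcoef1
  have hexact := sum_range_wellPoised a (a + t) n hden0 (hone.symm ▸ hsub0)
  rw [← hat, hone, htwo] at hexact
  rw [← hexact, hcoef (left_ne_zero_of_mul hratio0) hsub0] at hright
  have hhalf (k : ℕ) : ⦅a⦆_k ^ 2 * ⦅(1 / 2 : K)⦆_k / (k ! * ⦅(a + 1) / 2⦆_k * ⦅a / 2 + 1⦆_k) =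
      ⦅a⦆_k ^ 2 * ⦅(1 + k : K)⦆_k / (k ! * ⦅1 + a⦆_(2 * k)) := by
    rw [mul_assoc, mul_div_mul_comm, ascPochhammer_eval_half_div, mul_div_mul_comm]
  simp only [hhalf]
  rw [← sub_add_sub_cancel]
  exact (norm_add_le_max _ _).trans (max_le hleft hright)

end Ultrametric

end Hypergeometric

theorem cast_poch {K : Type*} [Field K] [CharZero K] (a : ℚ) (k : ℕ) :
    ((poch a k : ℚ) : K) = (ascPochhammer K k).eval (a : K) := by
  induction k with
  | zero => simp [poch]
  | succ k ih =>
    rw [ascPochhammer_succ_eval, ← ih, poch, prod_range_succ, ← poch]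
    push_cast
    rfl

theorem one_div_add_natCast_div {K : Type*} [Field K] [CharZero K] {n m : ℕ} (hm : m ≠ 0)
    (h : n % m = 1) : 1 / m + ((n - 1) / m : ℕ) = (n / m : K) := by
  have hm0 : (m : K) ≠ 0 := Nat.cast_ne_zero.2 hm
  have hn : m * (n / m) + 1 = n := h ▸ Nat.div_add_mod n m
  have hdiv : m * ((n - 1) / m) + 1 = n := by
    rw [Nat.sub_eq_of_eq_add hn.symm, Nat.mul_div_cancel_left _ (Nat.pos_of_ne_zero hm), hn]
  have hcast : (m : K) * ((n - 1) / m : ℕ) + 1 = n := mod_cast hdiv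
  rw [← hcast]
  field_simp
  ring

theorem stmt10_general {p m : ℕ} [Fact p.Prime] (hm : p % m = 1) :
    ‖(((∑ k ∈ range ((p - 1) / m + 1), (-1 : ℚ) ^ k * poch (1 / m) k ^ 3 / (k.factorial : ℚ) ^ 3) -
        ((-1 : ℚ) ^ ((p - 1) / m) * p * ∑ k ∈ range ((p - 1) / m + 1),
          poch (1 / m) k ^ 2 * poch (1 / 2) k /
            ((k.factorial : ℚ) * poch ((1 / m + 1) / 2) k * poch (1 / m / 2 + 1) k)) : ℚ) :
      ℚ_[p])‖ ≤ (p : ℝ) ^ (-2 : ℤ) := by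
  have hp : p.Prime := Fact.out
  have hcop : p.Coprime m := by
    rw [Nat.coprime_comm, Nat.Coprime, Nat.gcd_rec, hm, Nat.gcd_one_left]
  have hm0 : m ≠ 0 := by
    rintro rfl
    exact hp.ne_one (by simpa using hm)
  have hsum := one_div_add_natCast_div (K := ℚ_[p]) hm0 hm
  have hnorm : ‖(1 / m : ℚ_[p]) + ((p - 1) / m : ℕ)‖ = (p : ℝ)⁻¹ := by
    rw [hsum, norm_div, Padic.norm_natCast_eq_one_iff.2 hcop, div_one, Padic.norm_p]
  have hfac : ‖(((p - 1) / m).factorial : ℚ_[p])‖ = 1 :=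
    Padic.norm_natCast_eq_one_iff.2 <| hp.coprime_factorial_of_lt <|
      (Nat.div_le_self _ m).trans_lt (Nat.sub_one_lt hp.ne_zero)
  have h := norm_sum_ascPochhammer_cube_sub_mul_sum_le hfac
    (norm_pos_iff.1 (hnorm ▸ inv_pos.2 (Nat.cast_pos.2 hp.pos)))
    (hnorm ▸ inv_lt_one_of_one_lt₀ (Nat.one_lt_cast.2 hp.one_lt))
  rw [hnorm, hsum, div_div_div_cancel_right₀ (Nat.cast_ne_zero.2 hm0), div_one] at h
  rw [zpow_neg, ← inv_zpow]
  push_cast [cast_poch]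
  exact h

theorem stmt10 (p : ℕ) [Fact p.Prime] (hodd : Odd p) (hp3 : p % 3 = 1) :
    ‖(((∑ k ∈ Finset.range ((p - 1) / 3 + 1),
          (-1 : ℚ) ^ k * poch (1/3) k ^ 3 / ((k.factorial : ℚ)) ^ 3) -
        ((-1 : ℚ) ^ ((p - 1) / 3) * p *
          ∑ k ∈ Finset.range ((p - 1) / 3 + 1),
            poch (1/3) k ^ 2 * poch (1/2) k /
              ((k.factorial : ℚ) * poch (2/3) k * poch (7/6) k)) : ℚ) : ℚ_[p])‖ ≤
      (p : ℝ) ^ (-2 : ℤ) := by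
  convert stmt10_general hp3 using 8 <;> norm_num
end

section
/- Let p be a prime with p ≡ 3 (mod 4). Then Σ_{k=0}^{(p+1)/4} (−1)^k (8k−1) (−1/4)_k^3 / k!^3 ≡ (−1)^{(p+1)/4} · p (mod p^3). -/
/-!
Put `q_y(x) = x (x² - y)`, replace every cube `x³` by `q_y(x)` in `∑ (-1)^k (a + 2k) (a)_k³ / k!³`
and clear denominators; call the result `W(y)`, so that `W(0)` is `n!³` times the original sum.
As `q_y` is odd, `k ↦ n - k` shows that `W(y)` vanishes at `a = -n` for every `y`. Hence `a + n`
divides the polynomial `W`, and `(a + n) y` divides `W(y) - W(0)`. At `y = (a + n)²` the sum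
becomes a terminating very-well-poised `₄F₃(-1)`, which has a closed form congruent to
`(-1)^n n!³ (a + n)` modulo `(a + n)³`. Therefore so is `W(0)`. The theorem is the case
`a = -1/4`, `n = (p + 1)/4`, where `a + n = p/4`.
-/

open Finset

section CommRing

variable {R S : Type*} [CommRing R] [CommRing S]

lemma add_mul_sum_choose_succ (x : R) (f : ℕ → R) (n : ℕ) :
    (x + n + 1) * ∑ k ∈ range (n + 2), (n + 1).choose k * f k =
      ∑ k ∈ range (n + 1),
        n.choose k * ((x + n + 1 + k) * f k + (x + k + 1) * f (k + 1)) := by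
  have hterm (k : ℕ) : (x + n + 1) * (n + 1).choose (k + 1) =
      n.choose (k + 1) * (x + n + 1 + (k + 1)) + n.choose k * (x + k + 1) := by
    have habsorb : (n.choose k : R) * (n + 1) =
        (n.choose k + n.choose (k + 1)) * (k + 1) := by
      have h := n.add_one_mul_choose_eq k
      rw [n.choose_succ_succ', mul_comm] at h
      exact_mod_cast congrArg (Nat.cast : ℕ → R) h
    rw [n.choose_succ_succ']
    push_cast
    linear_combination habsorb
  have hfirst : ∑ k ∈ range (n + 1), n.choose k * ((x + n + 1 + k) * f k) =
      ∑ k ∈ range (n + 1), n.choose (k + 1) * ((x + n + 1 + (k + 1)) * f (k + 1)) +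
        (x + n + 1) * f 0 := by
    have h := sum_range_succ' (fun k : ℕ ↦ n.choose k * ((x + n + 1 + k) * f k)) (n + 1)
    rw [sum_range_succ] at h
    simpa using h
  simp only [mul_add (Nat.cast _ : R), sum_add_distrib]
  rw [hfirst, sum_range_succ', mul_add, mul_sum, add_right_comm (∑ k ∈ range (n + 1), _),
    ← sum_add_distrib]
  congr 1
  · refine sum_congr rfl fun k _ ↦ ?_
    linear_combination f (k + 1) * hterm k
  · simp

lemma prod_range_add_natCast_succ (a : R) (n : ℕ) :
    ∏ j ∈ range (n + 1), (a + j) = a * ∏ j ∈ range n, (a + 1 + j) := by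
  rw [prod_range_succ', Nat.cast_zero, add_zero, mul_comm]
  refine congrArg (a * ·) (prod_congr rfl fun j _ ↦ ?_)
  push_cast
  ring

lemma prod_range_add_natCast_add_two (a : R) (n : ℕ) :
    ∏ j ∈ range (n + 2), (a + j) = a * (a + 1) * ∏ j ∈ range n, (a + 2 + j) := by
  rw [prod_range_add_natCast_succ, prod_range_add_natCast_succ, add_assoc a, one_add_one_eq_two,
    mul_assoc]

lemma prod_range_natCast_add_one (n : ℕ) : ∏ j ∈ range n, ((j : R) + 1) = n.factorial := by
  rw [← prod_range_add_one_eq_factorial]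
  push_cast
  rfl

/-- The `k`-th term, apart from its binomial coefficient, of the very-well-poised series
`₄F₃(a, 1 + a/2, -n, c; a/2, 1 + a + n, 1 + a - c; -1)`, multiplied by
`a (1 + a + n)_n (1 + a - c)_n` to clear denominators. The deformed sum of cubes becomes this series
with `c = 2a + n`. -/
def veryWellPoisedTerm (n k : ℕ) (a c : R) : R :=
  (a + 2 * k) * (∏ j ∈ range k, ((a + j) * (c + j))) *
    ∏ j ∈ Ico k n, ((a + n + 1 + j) * (a - c + 1 + j))

lemma add_mul_veryWellPoisedTerm_succ {n k : ℕ} (hk : k ≤ n) (a c : R) :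
    (a + n + 1 + k) * veryWellPoisedTerm (n + 1) k a c =
      (a - c + n + 1) * (a + 2 * n + 1) * (a + 2 * n + 2) * veryWellPoisedTerm n k a c := by
  have hshift : (a + n + 1 + k) * ∏ j ∈ Ico k (n + 1), (a + (n + 1 : ℕ) + 1 + j) =
      (∏ j ∈ Ico k n, (a + n + 1 + j)) * (a + 2 * n + 1) * (a + 2 * n + 2) := by
    calc (a + n + 1 + k) * ∏ j ∈ Ico k (n + 1), (a + (n + 1 : ℕ) + 1 + j)
      _ = (a + n + 1 + k) * ∏ j ∈ Ico (k + 1) (n + 2), (a + n + 1 + j) := by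
        rw [← prod_Ico_add']
        refine congrArg _ (prod_congr rfl fun j _ ↦ ?_)
        push_cast
        ring
      _ = ∏ j ∈ Ico k (n + 2), (a + n + 1 + j) :=
        (prod_eq_prod_Ico_succ_bot (by lia) fun j : ℕ ↦ a + n + 1 + j).symm
      _ = _ := by
        rw [prod_Ico_succ_top (by lia), prod_Ico_succ_top hk]
        push_cast
        ring
  simp only [veryWellPoisedTerm, prod_mul_distrib]
  rw [prod_Ico_succ_top hk (fun j : ℕ ↦ a - c + 1 + j)]
  linear_combination (a + 2 * k) * (∏ j ∈ range k, (a + j)) * (∏ j ∈ range k, (c + j)) *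
    (∏ j ∈ Ico k n, (a - c + 1 + j)) * (a - c + 1 + n) * hshift

lemma add_mul_veryWellPoisedTerm_succ_succ (n k : ℕ) (a c : R) :
    (a + k + 1) * veryWellPoisedTerm (n + 1) (k + 1) a c =
      c * a * (a + 1) * veryWellPoisedTerm n k (a + 2) (c + 1) := by
  have ha : (∏ j ∈ range (k + 1), (a + j)) * (a + k + 1) =
      a * (a + 1) * ∏ j ∈ range k, (a + 2 + j) := by
    rw [← prod_range_add_natCast_add_two, prod_range_succ _ (k + 1)]
    push_cast
    ring
  have hIco : ∏ j ∈ Ico (k + 1) (n + 1), ((a + (n + 1 : ℕ) + 1 + j) * (a - c + 1 + j)) =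
      ∏ j ∈ Ico k n, ((a + 2 + n + 1 + j) * (a + 2 - (c + 1) + 1 + j)) := by
    rw [← prod_Ico_add']
    refine prod_congr rfl fun j _ ↦ ?_
    push_cast
    ring
  simp only [veryWellPoisedTerm]
  rw [hIco, prod_mul_distrib, prod_mul_distrib (s := range k), prod_range_add_natCast_succ c]
  push_cast
  linear_combination (a + 2 * (k + 1)) * (∏ j ∈ range k, (c + 1 + j)) * c *
    (∏ j ∈ Ico k n, ((a + 2 + n + 1 + j) * (a + 2 - (c + 1) + 1 + j))) * ha

theorem sum_choose_mul_veryWellPoisedTerm [NoZeroDivisors R] (n : ℕ) (a c : R)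
    (ha : ∀ m : ℕ, a + m ≠ 0) :
    ∑ k ∈ range (n + 1), n.choose k * veryWellPoisedTerm n k a c =
      ∏ j ∈ range (2 * n + 1), (a + j) := by
  induction n generalizing a c with
  | zero => simp [veryWellPoisedTerm]
  | succ n ih =>
    have ha' (m : ℕ) : a + 2 + m ≠ 0 := by
      simpa only [Nat.cast_add, Nat.cast_ofNat, add_assoc] using ha (2 + m)
    have hn : a + n + 1 ≠ 0 := by simpa only [Nat.cast_add_one, add_assoc] using ha (n + 1)
    apply mul_left_cancel₀ hn
    calc (a + n + 1) * ∑ k ∈ range (n + 2), (n + 1).choose k * veryWellPoisedTerm (n + 1) k a c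
      _ = (a - c + n + 1) * (a + 2 * n + 1) * (a + 2 * n + 2) *
            ∑ k ∈ range (n + 1), n.choose k * veryWellPoisedTerm n k a c +
          c * a * (a + 1) *
            ∑ k ∈ range (n + 1), n.choose k * veryWellPoisedTerm n k (a + 2) (c + 1) := by
        rw [add_mul_sum_choose_succ, mul_sum, mul_sum, ← sum_add_distrib]
        refine sum_congr rfl fun k hk ↦ ?_
        rw [add_mul_veryWellPoisedTerm_succ (Nat.lt_succ_iff.mp (mem_range.mp hk)),
          add_mul_veryWellPoisedTerm_succ_succ]
        ring
      _ = (a + n + 1) * ∏ j ∈ range (2 * (n + 1) + 1), (a + j) := by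
        have hlow := prod_range_add_natCast_add_two a (2 * n + 1)
        have hhigh : ∏ j ∈ range (2 * n + 3), (a + j) =
            (∏ j ∈ range (2 * n + 1), (a + j)) * (a + 2 * n + 1) * (a + 2 * n + 2) := by
          rw [prod_range_succ, prod_range_succ]
          push_cast
          ring
        rw [ih a c ha, ih (a + 2) (c + 1) ha', show 2 * (n + 1) + 1 = 2 * n + 3 by ring]
        linear_combination -(a - c + n + 1) * hhigh - c * hlow

/-- The sum `∑ (-1)^k (a + 2k) q(a) ⋯ q(a+k-1) / (q(1) ⋯ q(k))` over `k ≤ n`, multiplied by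
`q(1) ⋯ q(n)` to clear denominators. The choice `q(x) = x³` gives `(-1)^k (a + 2k) (a)_k³ / k!³`
before scaling. -/
def wellPoisedSum (q : R → R) (n : ℕ) (a : R) : R :=
  ∑ k ∈ range (n + 1), (-1) ^ k * (a + 2 * k) *
    (∏ j ∈ range k, q (a + j)) * ∏ j ∈ Ico k n, q (j + 1)

lemma map_wellPoisedSum (f : R →+* S) {q : R → R} {q' : S → S} (hq : ∀ x, f (q x) = q' (f x))
    (n : ℕ) (a : R) : f (wellPoisedSum q n a) = wellPoisedSum q' n (f a) := by
  simp [wellPoisedSum, hq, map_ofNat f 2]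

lemma prod_range_natCast_sub_eq_prod_Ico (q : R → R) {n k : ℕ} (hk : k ≤ n) :
    ∏ j ∈ range k, q (n - j) = ∏ j ∈ Ico (n - k) n, q (j + 1) := by
  calc ∏ j ∈ range k, q (n - j)
    _ = ∏ j ∈ Ico 0 k, q ((n - j : ℕ) : R) := by
      rw [range_eq_Ico]
      refine prod_congr rfl fun j hj ↦ ?_
      rw [Nat.cast_sub ((mem_Ico.mp hj).2.le.trans hk)]
    _ = ∏ j ∈ Ico (n - k + 1) (n + 1), q (j : R) := by
      rw [prod_Ico_reflect (fun j : ℕ ↦ q j) 0 (by lia), Nat.sub_zero, Nat.sub_add_comm hk]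
    _ = ∏ j ∈ Ico (n - k) n, q (j + 1) := by
      rw [← prod_Ico_add']
      simp only [Nat.cast_add_one]

theorem wellPoisedSum_neg_natCast [NoZeroDivisors R] [CharZero R] {q : R → R} (hq : q.Odd)
    (n : ℕ) : wellPoisedSum q n (-n) = 0 := by
  set t : ℕ → R := fun k ↦ (-n + 2 * k) *
    ((∏ j ∈ Ico (n - k) n, q (j + 1)) * ∏ j ∈ Ico k n, q (j + 1)) with ht
  have hsum : wellPoisedSum q n (-n) = ∑ k ∈ range (n + 1), t k := by
    refine sum_congr rfl fun k hk ↦ ?_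
    have hneg (j : ℕ) : q (-n + j) = -q (n - j) := by rw [← hq, neg_sub, neg_add_eq_sub]
    have hk : k ≤ n := Nat.lt_succ_iff.mp (mem_range.mp hk)
    have hsign : (-1 : R) ^ k * (-1) ^ k = 1 := by rw [← mul_pow, neg_one_mul, neg_neg, one_pow]
    simp only [ht, hneg]
    rw [prod_neg, card_range, ← prod_range_natCast_sub_eq_prod_Ico q hk]
    linear_combination (-n + 2 * k) * (∏ j ∈ range k, q (n - j)) *
      (∏ j ∈ Ico k n, q (j + 1)) * hsign
  have hreflect : ∑ k ∈ range (n + 1), t k = -∑ k ∈ range (n + 1), t k := by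
    rw [← sum_neg_distrib, ← sum_range_reflect]
    refine sum_congr rfl fun k hk ↦ ?_
    have hk : k ≤ n := Nat.lt_succ_iff.mp (mem_range.mp hk)
    simp only [ht]
    rw [Nat.add_sub_cancel, Nat.sub_sub_self hk, Nat.cast_sub hk]
    ring
  rw [hsum]
  exact self_eq_neg.mp hreflect

/-- The odd cubic `x (x² - y) = (x - √y) x (x + √y)`, which deforms `x³`; taking the square `y` of
the shift as the parameter keeps all congruences polynomial in `y`. -/
def oddCubic (y x : R) : R := x * (x ^ 2 - y)

lemma oddCubic_odd (y : R) : (oddCubic y).Odd := fun x ↦ by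
  simp only [oddCubic]
  ring

lemma map_oddCubic (f : R →+* S) (y x : R) : f (oddCubic y x) = oddCubic (f y) (f x) := by
  simp [oddCubic]

open Polynomial in
lemma add_natCast_dvd_wellPoisedSum [NoZeroDivisors R] [CharZero R] (n : ℕ) (a y : R) :
    a + n ∣ wellPoisedSum (oddCubic y) n a := by
  have heval (b : R) : (wellPoisedSum (oddCubic (C y)) n X).eval b =
      wellPoisedSum (oddCubic y) n b := by
    simpa using map_wellPoisedSum (evalRingHom b) (map_oddCubic _ (C y)) n X
  simpa [heval, wellPoisedSum_neg_natCast (oddCubic_odd y)] using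
    sub_dvd_eval_sub a (-n) (wellPoisedSum (oddCubic (C y)) n X)

open Polynomial in
lemma add_natCast_mul_dvd_wellPoisedSum_sub [NoZeroDivisors R] [CharZero R] (n : ℕ) (a y : R) :
    (a + n) * y ∣ wellPoisedSum (oddCubic y) n a - wellPoisedSum (oddCubic 0) n a := by
  obtain ⟨g, hg⟩ := add_natCast_dvd_wellPoisedSum n (C a) X
  have heval (z : R) : wellPoisedSum (oddCubic z) n a = (a + n) * g.eval z := by
    have h := congrArg (evalRingHom z) hg
    rw [map_wellPoisedSum (evalRingHom z) (map_oddCubic _ X)] at h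
    simpa using h
  rw [heval, heval, ← mul_sub]
  exact mul_dvd_mul_left _ (by simpa using sub_dvd_eval_sub y 0 g)

lemma prod_natCast_sub_mul_prod_natCast_add_one {n k : ℕ} (hk : k ≤ n) :
    (∏ j ∈ range k, ((n : R) - j)) * ∏ j ∈ Ico k n, ((j : R) + 1) =
      n.factorial * n.choose k := by
  have hdesc : ∏ j ∈ range k, ((n : R) - j) = k.factorial * n.choose k := by
    rw [← Nat.cast_mul, ← Nat.descFactorial_eq_factorial_mul_choose,
      Nat.descFactorial_eq_prod_range, Nat.cast_prod]
    refine prod_congr rfl fun j hj ↦ ?_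
    rw [Nat.cast_sub ((mem_range.mp hj).le.trans hk)]
  rw [hdesc, ← prod_range_natCast_add_one n, ← prod_range_mul_prod_Ico _ hk,
    prod_range_natCast_add_one]
  ring

lemma wellPoisedSum_oddCubic_sq_eq_sum_choose (n : ℕ) (a : R) :
    wellPoisedSum (oddCubic ((a + n) ^ 2)) n a =
      n.factorial *
        ∑ k ∈ range (n + 1), n.choose k * veryWellPoisedTerm n k a (2 * a + n) := by
  rw [wellPoisedSum, mul_sum]
  refine sum_congr rfl fun k hk ↦ ?_
  have hlow (j : ℕ) : oddCubic ((a + n) ^ 2) (a + j) =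
      -((n - j) * ((a + j) * (2 * a + n + j))) := by
    simp only [oddCubic]
    ring
  have hhigh (j : ℕ) : oddCubic ((a + n) ^ 2) (j + 1) =
      (j + 1) * ((a + n + 1 + j) * (a - (2 * a + n) + 1 + j)) := by
    simp only [oddCubic]
    ring
  have hsign : (-1 : R) ^ k * (-1) ^ k = 1 := by rw [← mul_pow, neg_one_mul, neg_neg, one_pow]
  have hchoose := prod_natCast_sub_mul_prod_natCast_add_one (R := R)
    (Nat.lt_succ_iff.mp (mem_range.mp hk))
  simp only [hlow, hhigh, veryWellPoisedTerm]
  rw [prod_neg, card_range, prod_mul_distrib (s := range k),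
    prod_mul_distrib (s := Ico k n) (f := fun j : ℕ ↦ (j : R) + 1)]
  set A := ∏ j ∈ range k, ((a + j) * (2 * a + n + j))
  set B := ∏ j ∈ Ico k n, ((a + n + 1 + j) * (a - (2 * a + n) + 1 + j))
  linear_combination (a + 2 * k) * A * B *
    ((∏ j ∈ range k, ((n : R) - j)) * (∏ j ∈ Ico k n, ((j : R) + 1)) * hsign + hchoose)

lemma factorial_mul_prod_range_add_natCast (n : ℕ) (a : R) :
    n.factorial * ∏ j ∈ range (2 * n + 1), (a + j) =
      (-1) ^ n * (a + n) * ∏ j ∈ range n, oddCubic ((a + n) ^ 2) (j + 1) := by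
  have hsplit : ∏ j ∈ range (2 * n + 1), (a + j) =
      (∏ j ∈ range n, (a + j)) * ((a + n) * ∏ j ∈ range n, (a + n + 1 + j)) := by
    rw [two_mul, add_assoc, prod_range_add, ← prod_range_add_natCast_succ]
    simp only [Nat.cast_add, add_assoc]
  have hreflect : ∏ j ∈ range n, (a + j) = (-1) ^ n * ∏ j ∈ range n, ((j : R) + 1 - (a + n)) := by
    have h := prod_range_natCast_sub_eq_prod_Ico (fun x ↦ x - (a + n)) n.le_refl
    rw [Nat.sub_self, ← range_eq_Ico] at h
    calc ∏ j ∈ range n, (a + j)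
      _ = ∏ j ∈ range n, -((n : R) - j - (a + n)) := prod_congr rfl fun j _ ↦ by ring
      _ = _ := by rw [prod_neg, card_range, h]
  have hfactor (j : ℕ) : oddCubic ((a + n) ^ 2) (j + 1) =
      (j + 1) * (a + n + 1 + j) * (j + 1 - (a + n)) := by
    simp only [oddCubic]
    ring
  simp only [hfactor]
  rw [hsplit, hreflect, prod_mul_distrib, prod_mul_distrib, prod_range_natCast_add_one]
  ring

theorem wellPoisedSum_oddCubic_sq [NoZeroDivisors R] (n : ℕ) (a : R)
    (ha : ∀ m : ℕ, a + m ≠ 0) :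
    wellPoisedSum (oddCubic ((a + n) ^ 2)) n a =
      (-1) ^ n * (a + n) * ∏ j ∈ range n, oddCubic ((a + n) ^ 2) (j + 1) := by
  rw [wellPoisedSum_oddCubic_sq_eq_sum_choose, sum_choose_mul_veryWellPoisedTerm n a _ ha,
    factorial_mul_prod_range_add_natCast]

open Polynomial in
lemma dvd_prod_oddCubic_sub (n : ℕ) (y : R) :
    y ∣ (∏ j ∈ range n, oddCubic y (j + 1)) - (n.factorial : R) ^ 3 := by
  simpa [oddCubic, eval_prod, ← pow_succ', prod_pow, prod_range_natCast_add_one] using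
    sub_dvd_eval_sub y 0 (∏ j ∈ range n, oddCubic (X : R[X]) (j + 1))

open Polynomial in
theorem add_natCast_pow_three_dvd_wellPoisedSum_sub (n : ℕ) (a : R) :
    (a + n) ^ 3 ∣
      wellPoisedSum (oddCubic 0) n a - (-1) ^ n * (a + n) * (n.factorial : R) ^ 3 := by
  suffices h : (X + (n : ℤ[X])) ^ 3 ∣
      wellPoisedSum (oddCubic 0) n X - (-1) ^ n * (X + (n : ℤ[X])) * (n.factorial : ℤ[X]) ^ 3 by
    have hmap := map_dvd (eval₂RingHom (Int.castRingHom R) a) h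
    rw [map_sub, map_wellPoisedSum _ (map_oddCubic _ 0)] at hmap
    simpa [eval₂_pow] using hmap
  have hX (m : ℕ) : X + (m : ℤ[X]) ≠ 0 := by
    simpa using (monic_X_add_C (m : ℤ)).ne_zero
  set y : ℤ[X] := (X + (n : ℤ[X])) ^ 2 with hy
  have hdeform : (X + (n : ℤ[X])) * y ∣ wellPoisedSum (oddCubic y) n X -
      wellPoisedSum (oddCubic 0) n X := add_natCast_mul_dvd_wellPoisedSum_sub n X y
  have hclosed : (X + (n : ℤ[X])) * y ∣ wellPoisedSum (oddCubic y) n X -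
      (-1) ^ n * (X + (n : ℤ[X])) * (n.factorial : ℤ[X]) ^ 3 := by
    rw [hy, wellPoisedSum_oddCubic_sq n X hX, ← hy, ← mul_sub, mul_assoc]
    exact (mul_dvd_mul_left _ (dvd_prod_oddCubic_sub n y)).mul_left _
  rw [pow_succ', ← hy]
  simpa only [sub_sub_sub_cancel_left] using dvd_sub hclosed hdeform

end CommRing

lemma wellPoisedSum_oddCubic_zero_eq_sum_poch (n : ℕ) (x : ℚ) :
    wellPoisedSum (oddCubic 0) n x = (n.factorial : ℚ) ^ 3 *
      ∑ k ∈ range (n + 1), (-1) ^ k * (x + 2 * k) * poch x k ^ 3 / (k.factorial : ℚ) ^ 3 := by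
  rw [wellPoisedSum, mul_sum]
  refine sum_congr rfl fun k hk ↦ ?_
  have hfact : (n.factorial : ℚ) = k.factorial * ∏ j ∈ Ico k n, ((j : ℚ) + 1) := by
    rw [← prod_range_natCast_add_one k,
      prod_range_mul_prod_Ico _ (Nat.lt_succ_iff.mp (mem_range.mp hk)), prod_range_natCast_add_one]
  have hk0 : (k.factorial : ℚ) ≠ 0 := Nat.cast_ne_zero.mpr k.factorial_ne_zero
  simp only [oddCubic, sub_zero, ← pow_succ', prod_pow]
  rw [hfact, poch]
  field_simp
  ring

theorem norm_sum_poch_sub_le (p : ℕ) [Fact p.Prime] (x : ℚ) (hx : ‖(x : ℚ_[p])‖ ≤ 1) {n : ℕ}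
    (hn : n < p) :
    ‖((∑ k ∈ range (n + 1), (-1) ^ k * (x + 2 * k) * poch x k ^ 3 / (k.factorial : ℚ) ^ 3 -
        (-1) ^ n * (x + n) : ℚ) : ℚ_[p])‖ ≤ ‖((x + n : ℚ) : ℚ_[p])‖ ^ 3 := by
  set s := ∑ k ∈ range (n + 1), (-1) ^ k * (x + 2 * k) * poch x k ^ 3 / (k.factorial : ℚ) ^ 3
  obtain ⟨z, hz⟩ : ∃ z : ℤ_[p], (z : ℚ_[p]) = x := ⟨⟨x, hx⟩, rfl⟩
  obtain ⟨t, ht⟩ := add_natCast_pow_three_dvd_wellPoisedSum_sub n z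
  have hfact : ‖(n.factorial : ℚ_[p])‖ = 1 :=
    Padic.norm_natCast_eq_one_iff.mpr ((Fact.out : p.Prime).coprime_factorial_of_lt hn)
  have hsum : wellPoisedSum (oddCubic 0) n (x : ℚ_[p]) = (n.factorial : ℚ_[p]) ^ 3 * (s : ℚ) := by
    have h := congrArg (Rat.castHom ℚ_[p]) (wellPoisedSum_oddCubic_zero_eq_sum_poch n x)
    rw [map_wellPoisedSum _ (map_oddCubic _ 0)] at h
    simpa only [map_mul, map_pow, map_zero, map_natCast, Rat.coe_castHom] using h
  have hmul : (n.factorial : ℚ_[p]) ^ 3 * ((s - (-1) ^ n * (x + n) : ℚ) : ℚ_[p]) =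
      ((x + n : ℚ) : ℚ_[p]) ^ 3 * t := by
    have h := congrArg (algebraMap ℤ_[p] ℚ_[p]) ht
    rw [map_sub, map_wellPoisedSum _ (map_oddCubic _ 0), map_zero,
      PadicInt.algebraMap_apply, hz, hsum] at h
    simp only [map_mul, map_pow, map_add, map_neg, map_one, map_natCast,
      PadicInt.algebraMap_apply, hz] at h
    push_cast
    linear_combination h
  calc ‖((s - (-1) ^ n * (x + n) : ℚ) : ℚ_[p])‖
    _ = ‖(n.factorial : ℚ_[p]) ^ 3 * ((s - (-1) ^ n * (x + n) : ℚ) : ℚ_[p])‖ := by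
      rw [norm_mul, norm_pow, hfact, one_pow, one_mul]
    _ = ‖((x + n : ℚ) : ℚ_[p])‖ ^ 3 * ‖t‖ := by rw [hmul, norm_mul, norm_pow, PadicInt.norm_def]
    _ ≤ ‖((x + n : ℚ) : ℚ_[p])‖ ^ 3 := mul_le_of_le_one_right (by positivity) t.norm_le_one

theorem stmt15_general (p : ℕ) [Fact p.Prime] {r m : ℤ} {d n : ℕ} (hd : p.Coprime d)
    (hn : n < p) (hm : r + d * n = m) :
    ‖((∑ k ∈ range (n + 1), (-1) ^ k * (2 * d * k + r) * poch (r / d) k ^ 3 /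
        (k.factorial : ℚ) ^ 3 - (-1) ^ n * m : ℚ) : ℚ_[p])‖ ≤ ‖(m : ℚ_[p])‖ ^ 3 := by
  have hd0 : (d : ℚ) ≠ 0 := Nat.cast_ne_zero.mpr fun h ↦
    (Fact.out : p.Prime).ne_one (p.coprime_zero_right.mp (h ▸ hd))
  have hnorm : ‖(d : ℚ_[p])‖ = 1 := Padic.norm_natCast_eq_one_iff.mpr hd
  have hx : ‖((r / d : ℚ) : ℚ_[p])‖ ≤ 1 := by
    push_cast
    rw [norm_div, hnorm, div_one]
    exact Padic.norm_int_le_one r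
  have hlinear (m : ℚ) : (r : ℚ) + d * m = d * (r / d + m) := by field_simp
  have hsum : ∑ k ∈ range (n + 1), (-1) ^ k * (2 * d * k + r) * poch (r / d) k ^ 3 /
      (k.factorial : ℚ) ^ 3 = (d : ℚ) * ∑ k ∈ range (n + 1), (-1) ^ k * (r / d + 2 * k) *
        poch (r / d) k ^ 3 / (k.factorial : ℚ) ^ 3 := by
    rw [mul_sum]
    refine sum_congr rfl fun k _ ↦ ?_
    linear_combination (-1) ^ k * poch (r / d) k ^ 3 / (k.factorial : ℚ) ^ 3 * hlinear (2 * k)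
  have hmod : (m : ℚ) = d * (r / d + n) := by
    rw [← hlinear, ← hm]
    push_cast
    rfl
  calc ‖((∑ k ∈ range (n + 1), (-1) ^ k * (2 * d * k + r) * poch (r / d) k ^ 3 /
        (k.factorial : ℚ) ^ 3 - (-1) ^ n * m : ℚ) : ℚ_[p])‖
    _ = ‖((∑ k ∈ range (n + 1), (-1) ^ k * (r / d + 2 * k) * poch (r / d) k ^ 3 /
          (k.factorial : ℚ) ^ 3 - (-1) ^ n * (r / d + n) : ℚ) : ℚ_[p])‖ := by
      rw [hsum, hmod, mul_left_comm, ← mul_sub, Rat.cast_mul, norm_mul, Rat.cast_natCast, hnorm,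
        one_mul]
    _ ≤ ‖((r / d + n : ℚ) : ℚ_[p])‖ ^ 3 := norm_sum_poch_sub_le p (r / d) hx hn
    _ = ‖(m : ℚ_[p])‖ ^ 3 := by
      rw [← Rat.cast_intCast m, hmod, Rat.cast_mul, norm_mul, Rat.cast_natCast, hnorm, one_mul]

theorem stmt15 (p : ℕ) [Fact p.Prime] (hp4 : p % 4 = 3) :
    ‖(((∑ k ∈ Finset.range ((p + 1) / 4 + 1),
          (-1 : ℚ) ^ k * (8 * (k : ℚ) - 1) * poch (-1/4) k ^ 3 /
            ((k.factorial : ℚ)) ^ 3) -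
        ((-1 : ℚ) ^ ((p + 1) / 4) * p) : ℚ) : ℚ_[p])‖ ≤
      (p : ℝ) ^ (-3 : ℤ) := by
  have hp : p.Coprime 4 := by
    rw [Nat.coprime_comm, Nat.Coprime, Nat.gcd_rec, hp4]
    rfl
  have hcoeff : (2 * 4 : ℚ) = 8 := by norm_num
  simpa [hcoeff, ← sub_eq_add_neg, zpow_neg, zpow_ofNat] using
    stmt15_general p (r := -1) (m := p) (n := (p + 1) / 4) hp (by lia) (by lia)
end
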